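/- arXiv:2109.04317 — 4 statements merged into one kernel-verified Lean document; each statement's English description precedes it below -/
import Mathlib

section
/- For every ε ∈ (0, 0.25) there is an absolute constant C such that every finite simple graph G on n vertices with minimum degree δ ≥ 1 satisfying δ^(1+ε) ≥ n satisfies s(G) ≤ n/δ + C. -/
noncomputable section

namespace FL

/-- The weighted degree of a vertex `v` under an edge weighting `f`. -/
def weightedDeg {V : Type*} [Fintype V] (G : SimpleGraph V) [DecidableRel G.Adj]
    (f : Sym2 V → ℕ) (v : V) : ℕ :=
  ∑ u ∈ G.neighborFinset v, f s(u, v)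

/-- `f` is a `k`-irregular assignment for `G`: it takes values in `{1, …, k}` on the
edges of `G` and the weighted degrees of the vertices are pairwise distinct. -/
def IsIrregularAssignment {V : Type*} [Fintype V] (G : SimpleGraph V) [DecidableRel G.Adj]
    (k : ℕ) (f : Sym2 V → ℕ) : Prop :=
  (∀ e ∈ G.edgeSet, f e ∈ Finset.Icc 1 k) ∧ Function.Injective (weightedDeg G f)

/-- The irregularity strength `s(G)`: the least positive integer `k` for which a
`k`-irregular assignment exists (`⊤ = ∞` if none exists). -/
def irregularityStrength {V : Type*} [Fintype V] (G : SimpleGraph V)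
    [DecidableRel G.Adj] : ℕ∞ :=
  ⨅ (k : ℕ) (_ : 1 ≤ k) (_ : ∃ f : Sym2 V → ℕ, IsIrregularAssignment G k f), (k : ℕ∞)

/-!
Give the vertices independent random labels in `{0, …, n - 1}`, and give an edge weight `K + 1` or
`1` according to whether or not its labels add up to at least `n`, where `K ≥ n / δ + 4000` is
within a constant of `n / δ`. The weighted degree of `v` is then close to the uniformly
distributed value `deg v + K * deg v * x / n`, where `x` is the label of `v`, so by Hoeffding's
inequality an interval of length `ℓ` contains slightly fewer than `ℓ` weighted degrees.
A random reserve `S`, containing each vertex with probability `1 / K`, repairs the collisions.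

* Vertices outside `S` raise some of their edges into `S` by `1`. First fit makes their weighted
  degrees distinct and keeps them out of the integers `z` with `z / g % m < 4`.
* The edges inside `S` are weighted from scratch, so that the weighted degrees in `S` become
  distinct and satisfy `z / g % m < 4`. The vertices are processed in order of decreasing distance
  to the root of their component. Each processed vertex may still toggle between two values that
  differ by `g`, so a vertex can add any of many multiples of `g`; a vertex other than a root has
  an unprocessed neighbor, whose edge supplies the residue modulo `g`. There are so few roots that
  they can do without.

The density assumption makes every random deviation small compared with `δ / K`, the number of
neighbors that a vertex has in `S`.
-/

open scoped Finset

section Concentration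

open MeasureTheory ProbabilityTheory

variable {V A : Type*}

section Product

variable [Fintype V] [MeasurableSpace A] (μ : V → Measure A) [∀ v, IsProbabilityMeasure (μ v)]

lemma hasSubgaussianMGF_pi_indicator_sub (v : V) {B : Set A} (hB : MeasurableSet B) :
    HasSubgaussianMGF (fun ω : V → A ↦ B.indicator 1 (ω v) - (μ v).real B)
      ((‖(1 : ℝ) - 0‖₊ / 2) ^ 2) (Measure.pi μ) := by
  have measurable : Measurable (B.indicator (1 : A → ℝ)) := measurable_one.indicator hB
  have mean : ∫ ω : V → A, B.indicator (1 : A → ℝ) (ω v) ∂Measure.pi μ = (μ v).real B := by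
    rw [integral_comp_eval measurable.aestronglyMeasurable, integral_indicator_one hB]
  rw [← mean]
  refine hasSubgaussianMGF_of_mem_Icc
    (measurable.comp (measurable_pi_apply v)).aemeasurable (ae_of_all _ fun ω ↦ ?_)
  by_cases h : ω v ∈ B <;> simp [h]

lemma measureReal_pi_abs_sum_indicator_sub_ge_le {B : V → Set A}
    (hB : ∀ v, MeasurableSet (B v)) {T : Finset V} (hT : T.Nonempty) {L : ℝ} (hL : 0 ≤ L) :
    (Measure.pi μ).real
      {ω | L * √(#T) ≤ |∑ v ∈ T, ((B v).indicator 1 (ω v) - (μ v).real (B v))|} ≤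
      2 * Real.exp (-2 * L ^ 2) := by
  set Y : V → (V → A) → ℝ := fun v ω ↦ (B v).indicator 1 (ω v) - (μ v).real (B v)
  have indep : iIndepFun Y (Measure.pi μ) := iIndepFun_pi fun v ↦
    ((measurable_one.indicator (hB v)).sub_const ((μ v).real (B v))).aemeasurable
  have subgaussian (v : V) : HasSubgaussianMGF (Y v) ((‖(1 : ℝ) - 0‖₊ / 2) ^ 2) (Measure.pi μ) :=
    hasSubgaussianMGF_pi_indicator_sub μ v (hB v)
  have threshold_nonneg : 0 ≤ L * √(#T) := by positivity
  have exponent : -(L * √(#T)) ^ 2 / (2 * ∑ v ∈ T, (((‖(1 : ℝ) - 0‖₊ / 2) ^ 2 : NNReal) : ℝ)) =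
      -2 * L ^ 2 := by
    have card_pos : (0 : ℝ) < #T := by exact_mod_cast hT.card_pos
    rw [mul_pow, Real.sq_sqrt card_pos.le]
    simp only [sub_zero, nnnorm_one, one_div, inv_pow, NNReal.coe_inv, NNReal.coe_pow,
      NNReal.coe_ofNat, Finset.sum_const, nsmul_eq_mul, neg_mul]
    field_simp
  have upper := HasSubgaussianMGF.measure_sum_ge_le_of_iIndepFun indep (s := T)
    (fun v _ ↦ subgaussian v) threshold_nonneg
  have lower := HasSubgaussianMGF.measure_sum_ge_le_of_iIndepFun (X := fun v ↦ -Y v)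
    (indep.comp (fun _ ↦ Neg.neg) fun _ ↦ measurable_neg) (s := T)
    (fun v _ ↦ (subgaussian v).neg) threshold_nonneg
  rw [NNReal.coe_sum, exponent] at upper lower
  calc _ ≤ (Measure.pi μ).real ({ω | L * √(#T) ≤ ∑ v ∈ T, Y v ω} ∪
        {ω | L * √(#T) ≤ ∑ v ∈ T, (-Y v) ω}) := by
        refine measureReal_mono fun ω hω ↦ ?_
        simpa only [Set.mem_union, Set.mem_ofPred_eq, Pi.neg_apply, Finset.sum_neg_distrib,
          ← le_abs] using hω
    _ ≤ _ := (measureReal_union_le _ _).trans (by linarith)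

end Product

lemma exists_forall_abs_card_filter_sub_le [Finite V] [Fintype A] [Nonempty A] [DecidableEq A]
    {ι : Type*} [Fintype ι] (T : ι → Finset V) (P : ι → V → Finset A) {L : ℝ} (hL : 0 ≤ L)
    (hcard : 2 * Fintype.card ι * Real.exp (-2 * L ^ 2) < 1) :
    ∃ ω : V → A, ∀ i, |(#{v ∈ T i | ω v ∈ P i v} : ℝ) - ∑ v ∈ T i, (#(P i v) : ℝ) / Fintype.card A|
      ≤ L * √(#(T i)) := by
  have := Fintype.ofFinite V
  let _ : MeasurableSpace A := ⊤
  let μ : V → Measure A := fun _ ↦ uniformOn Set.univ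
  have sum_eq (ω : V → A) (i : ι) :
      ∑ v ∈ T i, ((P i v : Set A).indicator (1 : A → ℝ) (ω v) - (μ v).real (P i v)) =
        #{v ∈ T i | ω v ∈ P i v} - ∑ v ∈ T i, (#(P i v) : ℝ) / Fintype.card A := by
    rw [Finset.sum_sub_distrib, Finset.card_filter]
    simp [μ, Measure.real, uniformOn_univ, Set.indicator_apply]
  by_contra! hbad
  have cover : (Set.univ : Set (V → A)) ⊆ ⋃ i, {ω | (T i).Nonempty ∧ L * √(#(T i)) ≤
      |∑ v ∈ T i, ((P i v : Set A).indicator (1 : A → ℝ) (ω v) - (μ v).real (P i v))|} := by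
    intro ω _
    obtain ⟨i, hi⟩ := hbad ω
    refine Set.mem_iUnion.2 ⟨i, Finset.nonempty_iff_ne_empty.2 fun h ↦ ?_, ?_⟩
    · simp [h] at hi
    · exact (sum_eq ω i).symm ▸ hi.le
  have bound (i : ι) : (Measure.pi μ).real {ω | (T i).Nonempty ∧ L * √(#(T i)) ≤
      |∑ v ∈ T i, ((P i v : Set A).indicator (1 : A → ℝ) (ω v) - (μ v).real (P i v))|} ≤
      2 * Real.exp (-2 * L ^ 2) := by
    by_cases h : (T i).Nonempty
    · simpa [h] using
        measureReal_pi_abs_sum_indicator_sub_ge_le μ (fun v ↦ (P i v).measurableSet) h hL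
    · simp [h, Real.exp_nonneg]
  have : (1 : ℝ) ≤ 2 * Fintype.card ι * Real.exp (-2 * L ^ 2) := calc
    (1 : ℝ) = (Measure.pi μ).real Set.univ := probReal_univ.symm
    _ ≤ _ := measureReal_mono cover
    _ ≤ _ := measureReal_iUnion_fintype_le _
    _ ≤ _ := Finset.sum_le_sum fun i _ ↦ bound i
    _ = _ := by
      simp only [Finset.sum_const, Finset.card_univ, nsmul_eq_mul]
      ring
  linarith

end Concentration

section FirstFit

variable {V : Type*} {P : ℕ → Prop} [DecidablePred P]

lemma nth_mem_Ico_of_count_le_of_lt_count {a c k : ℕ} (hak : Nat.count P a ≤ k)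
    (hkc : k < Nat.count P c) :
    P (Nat.nth P k) ∧ Nat.nth P k ∈ Set.Ico a c ∧ Nat.count P (Nat.nth P k) = k := by
  have lt_card (hfin : (Set.ofPred P).Finite) : k < #hfin.toFinset :=
    hkc.trans_le (Nat.count_le_card hfin c)
  have count_nth := Nat.count_nth lt_card
  have lt_count_succ : k < Nat.count P (Nat.nth P k + 1) := by
    rw [Nat.count_nth_succ lt_card]
    exact Nat.lt_succ_self k
  exact ⟨Nat.nth_mem k lt_card, ⟨Nat.lt_succ_iff.1
    (Nat.lt_of_count_lt_count (hak.trans_lt lt_count_succ)), Nat.nth_lt_of_lt_count hkc⟩, count_nth⟩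

variable {A : Finset V} {w : V → ℕ} {D : ℕ}

/-- The number of elements satisfying `P` below the place that first-fit allocation, run in
increasing order over `A`, gives to `v`: each `u ≤ v` in `A` forces at least the elements below
`w u` together with those used by the members of `A` in `[u, v)`. -/
def firstFitRank [LinearOrder V] (P : ℕ → Prop) [DecidablePred P] (A : Finset V) (w : V → ℕ)
    (v : V) : ℕ :=
  {u ∈ A | u ≤ v}.sup fun u ↦ Nat.count P (w u) + #{x ∈ A | u ≤ x ∧ x < v}

section Ordered

variable [LinearOrder V]

lemma le_firstFitRank {u v : V} (hu : u ∈ A) (huv : u ≤ v) :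
    Nat.count P (w u) + #{x ∈ A | u ≤ x ∧ x < v} ≤ firstFitRank P A w v :=
  Finset.le_sup (f := fun u ↦ Nat.count P (w u) + #{x ∈ A | u ≤ x ∧ x < v})
    (Finset.mem_filter.2 ⟨hu, huv⟩)

lemma exists_firstFitRank_eq {v : V} (hv : v ∈ A) :
    ∃ u ∈ A, u ≤ v ∧
      firstFitRank P A w v = Nat.count P (w u) + #{x ∈ A | u ≤ x ∧ x < v} := by
  obtain ⟨u, hu, hsup⟩ := Finset.exists_mem_eq_sup {u ∈ A | u ≤ v}
    ⟨v, Finset.mem_filter.2 ⟨hv, le_rfl⟩⟩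
    fun u ↦ Nat.count P (w u) + #{x ∈ A | u ≤ x ∧ x < v}
  exact ⟨u, (Finset.mem_filter.1 hu).1, (Finset.mem_filter.1 hu).2, hsup⟩

lemma strictMonoOn_firstFitRank : StrictMonoOn (firstFitRank P A w) A := by
  intro u hu v _ huv
  obtain ⟨x, hx, hxu, hrank⟩ := exists_firstFitRank_eq (P := P) (w := w) hu
  have card_lt : #{z ∈ A | x ≤ z ∧ z < u} < #{z ∈ A | x ≤ z ∧ z < v} :=
    Finset.card_lt_card ⟨Finset.monotone_filter_right A fun z _ hz ↦ ⟨hz.1, hz.2.trans huv⟩,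
      fun hsub ↦ lt_irrefl u
        (Finset.mem_filter.1 (hsub (Finset.mem_filter.2 ⟨hu, hxu, huv⟩))).2.2⟩
  have := le_firstFitRank (P := P) (w := w) hx (hxu.trans huv.le)
  omega

lemma firstFitRank_lt_count (hw : MonotoneOn w A)
    (hfit : ∀ u ∈ A, ∀ v ∈ A, w u ≤ w v →
      Nat.count P (w u) + #{x ∈ A | w u ≤ w x ∧ w x ≤ w v} ≤ Nat.count P (w v + D + 1))
    {v : V} (hv : v ∈ A) : firstFitRank P A w v < Nat.count P (w v + D + 1) := by
  obtain ⟨u, hu, huv, hrank⟩ := exists_firstFitRank_eq (P := P) (w := w) hv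
  have card_lt : #{x ∈ A | u ≤ x ∧ x < v} < #{x ∈ A | w u ≤ w x ∧ w x ≤ w v} := by
    refine Finset.card_lt_card ⟨fun x hx ↦ ?_, fun hsub ↦ ?_⟩
    · obtain ⟨hxA, hux, hxv⟩ := Finset.mem_filter.1 hx
      exact Finset.mem_filter.2 ⟨hxA, hw hu hxA hux, hw hxA hv hxv.le⟩
    · have := hsub (Finset.mem_filter.2 ⟨hv, hw hu hv huv, le_rfl⟩)
      exact lt_irrefl v (Finset.mem_filter.1 this).2.2
  have := hfit u hu v hv (hw hu hv huv)
  omega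

lemma exists_injOn_of_monotoneOn (hw : MonotoneOn w A)
    (hfit : ∀ u ∈ A, ∀ v ∈ A, w u ≤ w v →
      Nat.count P (w u) + #{x ∈ A | w u ≤ w x ∧ w x ≤ w v} ≤ Nat.count P (w v + D + 1)) :
    ∃ t : V → ℕ, (∀ v ∈ A, P (t v) ∧ w v ≤ t v ∧ t v ≤ w v + D) ∧ Set.InjOn t A := by
  have spec {v : V} (hv : v ∈ A) := nth_mem_Ico_of_count_le_of_lt_count
    ((Nat.le_add_right _ _).trans (le_firstFitRank hv le_rfl)) (firstFitRank_lt_count hw hfit hv)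
  refine ⟨fun v ↦ Nat.nth P (firstFitRank P A w v), fun v hv ↦ ?_, fun u hu v hv huv ↦ ?_⟩
  · obtain ⟨hP, hmem, -⟩ := spec hv
    exact ⟨hP, hmem.1, Nat.lt_succ_iff.1 hmem.2⟩
  · refine (strictMonoOn_firstFitRank (P := P) (w := w)).injOn hu hv ?_
    calc firstFitRank P A w u
        = Nat.count P (Nat.nth P (firstFitRank P A w u)) := (spec hu).2.2.symm
      _ = Nat.count P (Nat.nth P (firstFitRank P A w v)) := congrArg (Nat.count P) huv
      _ = firstFitRank P A w v := (spec hv).2.2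

end Ordered

lemma exists_injOn_of_card_le_count
    (hfit : ∀ u ∈ A, ∀ v ∈ A, w u ≤ w v →
      Nat.count P (w u) + #{x ∈ A | w u ≤ w x ∧ w x ≤ w v} ≤ Nat.count P (w v + D + 1)) :
    ∃ t : V → ℕ, (∀ v ∈ A, P (t v) ∧ w v ≤ t v ∧ t v ≤ w v + D) ∧ Set.InjOn t A := by
  let _ : LinearOrder V := LinearOrder.lift' (fun v ↦ toLex (w v, embeddingToCardinal v))
    fun u v h ↦ embeddingToCardinal.injective (Prod.ext_iff.1 (toLex.injective h)).2
  refine exists_injOn_of_monotoneOn (fun u _ v _ huv ↦ ?_) hfit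
  exact Prod.Lex.monotone_fst _ _ huv

end FirstFit

section ResidueClasses

lemma count_add_mul_of_periodic {p : ℕ → Prop} [DecidablePred p] {q : ℕ}
    (hp : Function.Periodic p q) (a k : ℕ) :
    Nat.count p (a + q * k) = Nat.count p a + k * Nat.count p q := by
  have count_add_period (c : ℕ) : Nat.count p (c + q) = Nat.count p c + Nat.count p q := by
    rw [Nat.count_add']
    congr! 2
    exact funext hp
  induction k with
  | zero => simp
  | succ k ih =>
    rw [mul_add_one, ← add_assoc, count_add_period, ih]
    ring

variable {g m : ℕ}

lemma le_count_le_div_mod (hg : 0 < g) {r : ℕ} (hr : r ≤ m) :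
    g * (m - r) ≤ Nat.count (fun z ↦ r ≤ z / g % m) (g * m) := by
  conv_rhs => rw [← Nat.add_sub_cancel' hr, mul_add, Nat.count_add]
  refine (Nat.count_of_forall fun z hz ↦ ?_).ge.trans (Nat.le_add_left _ _)
  have lt : r + z / g < m := by
    have := Nat.div_lt_of_lt_mul hz
    omega
  rw [Nat.mul_add_div hg, Nat.mod_eq_of_lt (by omega)]
  exact Nat.le_add_right r _

lemma count_add_sub_le_count_le_div_mod (hg : 0 < g) (hm : 0 < m) {r : ℕ} (hr : r ≤ m)
    (a ℓ : ℕ) :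
    (Nat.count (fun z ↦ r ≤ z / g % m) a : ℝ) + (1 - r / m) * ℓ - g * m ≤
      Nat.count (fun z ↦ r ≤ z / g % m) (a + ℓ) := by
  have periodic : Function.Periodic (fun z ↦ r ≤ z / g % m) (g * m) := fun z ↦ by
    simp only [Nat.add_mul_div_left _ _ hg, Nat.add_mod_right]
  have whole_periods : Nat.count (fun z ↦ r ≤ z / g % m) a + ℓ / (g * m) * (g * (m - r)) ≤
      Nat.count (fun z ↦ r ≤ z / g % m) (a + ℓ) := calc
    _ ≤ Nat.count (fun z ↦ r ≤ z / g % m) a +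
        ℓ / (g * m) * Nat.count (fun z ↦ r ≤ z / g % m) (g * m) := by
      gcongr
      exact le_count_le_div_mod hg hr
    _ = Nat.count (fun z ↦ r ≤ z / g % m) (a + g * m * (ℓ / (g * m))) :=
      (count_add_mul_of_periodic periodic _ _).symm
    _ ≤ _ := Nat.count_monotone _ (Nat.add_le_add_left (Nat.mul_div_le _ _) _)
  have ratio_nonneg : 0 ≤ 1 - (r : ℝ) / m :=
    sub_nonneg.2 (div_le_one_of_le₀ (by exact_mod_cast hr) (by positivity))
  have lt_succ_period : (ℓ : ℝ) ≤ g * m * ((ℓ / (g * m) : ℕ) + 1) := by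
    exact_mod_cast (Nat.lt_mul_div_succ ℓ (Nat.mul_pos hg hm)).le
  calc (Nat.count (fun z ↦ r ≤ z / g % m) a : ℝ) + (1 - r / m) * ℓ - g * m
      ≤ Nat.count (fun z ↦ r ≤ z / g % m) a +
        (1 - r / m) * (g * m * ((ℓ / (g * m) : ℕ) + 1)) - g * m := by gcongr
    _ = (Nat.count (fun z ↦ r ≤ z / g % m) a + (ℓ / (g * m) : ℕ) * (g * (m - r : ℕ)) : ℝ)
        - g * r := by
      rw [Nat.cast_sub hr]
      field_simp
      ring
    _ ≤ (Nat.count (fun z ↦ r ≤ z / g % m) a + (ℓ / (g * m) : ℕ) * (g * (m - r : ℕ)) : ℝ) :=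
      sub_le_self _ (by positivity)
    _ ≤ _ := by exact_mod_cast whole_periods

lemma injOn_add_add_mul {g' : ℕ} (hg : g' ≤ g) (x : ℕ) (i : ℕ → ℕ → ℕ)
    (hi : ∀ a, Function.Injective (i a)) :
    Set.InjOn (fun p : ℕ × ℕ ↦ x + p.1 + g * i p.1 p.2) {p | p.1 < g'} := by
  rintro ⟨a, k⟩ (ha : a < g') ⟨b, l⟩ (hb : b < g') (h : x + a + g * i a k = x + b + g * i b l)
  have remainder : a = b := by
    have := congrArg (· % g) (show a + g * i a k = b + g * i b l by omega)
    simpa [Nat.mod_eq_of_lt (ha.trans_le hg), Nat.mod_eq_of_lt (hb.trans_le hg)] using this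
  subst remainder
  have quotient : g * i a k = g * i a l := by omega
  exact Prod.ext rfl (hi a (Nat.eq_of_mul_eq_mul_left (by omega) quotient))

lemma exists_add_mul_div_mod_eq_notMem {h g' R τ : ℕ} (hg' : g' ≤ g) (hR : m * R ≤ h + 1)
    (hτ : τ < m) (x : ℕ) {F : Finset ℕ} (hF : #F < g' * R) :
    ∃ a < g', ∃ j ≤ h, (x + a + g * j) / g % m = τ ∧ x + a + g * j ∉ F := by
  have hg : 0 < g := hg'.trans_lt' (pos_of_mul_pos_left (hF.trans_le' (Nat.zero_le _)) R.zero_le)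
  -- `shift a` is the least number of steps `g` that bring `x + a` to residue `τ`.
  let shift (a : ℕ) : ℕ := (τ + (m - (x + a) / g % m)) % m
  have hshift (a : ℕ) : shift a < m := Nat.mod_lt _ (by omega)
  have residue (a k : ℕ) : (x + a + g * (shift a + m * k)) / g % m = τ := by
    have := Nat.mod_lt ((x + a) / g) (show 0 < m by omega)
    rw [Nat.add_mul_div_left _ _ hg, ← add_assoc, Nat.add_mul_mod_self_left, Nat.add_mod_mod,
      ← Nat.mod_add_mod, show (x + a) / g % m + (τ + (m - (x + a) / g % m)) = τ + m by omega,
      Nat.add_mod_right, Nat.mod_eq_of_lt hτ]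
  have inj : Set.InjOn (fun p : ℕ × ℕ ↦ x + p.1 + g * (shift p.1 + m * p.2))
      (Finset.range g' ×ˢ Finset.range R : Finset (ℕ × ℕ)) :=
    (injOn_add_add_mul hg' x (fun a k ↦ shift a + m * k) fun a k l hkl ↦
      Nat.eq_of_mul_eq_mul_left (by omega) (Nat.add_left_cancel hkl)).mono
      fun p hp ↦ Finset.mem_range.1 (Finset.mem_product.1 hp).1
  obtain ⟨z, hz, hzF⟩ := Finset.exists_mem_notMem_of_card_lt_card
    (hF.trans_eq (by rw [Finset.card_image_of_injOn inj, Finset.card_product,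
      Finset.card_range, Finset.card_range]))
  obtain ⟨⟨a, k⟩, hak, rfl⟩ := Finset.mem_image.1 hz
  obtain ⟨ha, hk⟩ := Finset.mem_product.1 hak
  refine ⟨a, Finset.mem_range.1 ha, shift a + m * k, ?_, residue a k, hzF⟩
  have : m * (k + 1) ≤ m * R := Nat.mul_le_mul_left m (Finset.mem_range.1 hk)
  have := hshift a
  rw [mul_add_one] at *
  omega

end ResidueClasses

section Levels

variable {W : Type*} (H : SimpleGraph W)

/-- The distance from `v` to a chosen vertex of its connected component. -/
def level (v : W) : ℕ :=
  H.dist v (H.connectedComponentMk v).out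

lemma reachable_out (v : W) : H.Reachable v (H.connectedComponentMk v).out :=
  (SimpleGraph.ConnectedComponent.exact (Quot.out_eq _)).symm

lemma eq_out_of_level_eq_zero {v : W} (hv : level H v = 0) : v = (H.connectedComponentMk v).out :=
  (reachable_out H v).dist_eq_zero_iff.1 hv

lemma exists_adj_level_lt {v : W} (hv : level H v ≠ 0) :
    ∃ u, H.Adj v u ∧ level H u < level H v := by
  obtain ⟨walk, hlength⟩ := (reachable_out H v).exists_walk_length_eq_dist
  generalize hroot : (H.connectedComponentMk v).out = root at walk hlength
  rw [level, hroot] at hv ⊢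
  cases walk with
  | nil => exact absurd SimpleGraph.dist_self hv
  | @cons _ u _ hadj tail =>
    refine ⟨u, hadj, ?_⟩
    rw [level, SimpleGraph.ConnectedComponent.connectedComponentMk_eq_of_adj hadj.symm, hroot,
      ← hlength, SimpleGraph.Walk.length_cons]
    exact Nat.lt_succ_of_le (SimpleGraph.dist_le tail)

lemma card_level_eq_zero_mul_le [Fintype W] [DecidableRel H.Adj] {h : ℕ}
    (hdeg : ∀ v, h ≤ H.degree v) : #{v | level H v = 0} * (h + 1) ≤ Fintype.card W := by
  classical
  have component_eq {z x : W} (hx : x ∈ insert z (H.neighborFinset z)) :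
      H.connectedComponentMk x = H.connectedComponentMk z := by
    obtain rfl | hx := Finset.mem_insert.1 hx
    · rfl
    · exact SimpleGraph.ConnectedComponent.connectedComponentMk_eq_of_adj
        ((H.mem_neighborFinset _ _).1 hx).symm
  have disjoint : (({v | level H v = 0} : Finset W) : Set W).PairwiseDisjoint
      fun z ↦ insert z (H.neighborFinset z) := by
    intro z hz z' hz' hne
    refine Finset.disjoint_left.2 fun x hx hx' ↦ hne ?_
    rw [eq_out_of_level_eq_zero H (Finset.mem_filter.1 hz).2,
      eq_out_of_level_eq_zero H (Finset.mem_filter.1 hz').2,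
      ← component_eq hx, ← component_eq hx']
  calc #{v | level H v = 0} * (h + 1)
      = ∑ z with level H z = 0, (h + 1) := by rw [Finset.sum_const, smul_eq_mul]
    _ ≤ ∑ z with level H z = 0, #(insert z (H.neighborFinset z)) := by
      refine Finset.sum_le_sum fun z _ ↦ ?_
      rw [Finset.card_insert_of_notMem (H.notMem_neighborFinset_self z),
        H.card_neighborFinset_eq_degree]
      exact Nat.succ_le_succ (hdeg z)
    _ = #(({v | level H v = 0} : Finset W).biUnion fun z ↦ insert z (H.neighborFinset z)) :=
      (Finset.card_biUnion disjoint).symm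
    _ ≤ Fintype.card W := Finset.card_le_univ _

end Levels

section StarIndicator

variable {W : Type*} [DecidableEq W]

/-- The edge weighting that is `1` on the edges joining `s` to the members of `J` and `0`
elsewhere. -/
def starIndicator (s : W) (J : Finset W) : Sym2 W → ℕ :=
  fun e ↦ if e ∈ J.image fun u ↦ s(s, u) then 1 else 0

lemma starIndicator_mk (s u : W) (J : Finset W) :
    starIndicator s J s(s, u) = if u ∈ J then 1 else 0 := by
  simp only [starIndicator, Finset.mem_image, Sym2.congr_right, exists_eq_right]

lemma starIndicator_of_notMem {s : W} {e : Sym2 W} (he : s ∉ e) (J : Finset W) :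
    starIndicator s J e = 0 := by
  refine if_neg fun hmem ↦ he ?_
  obtain ⟨u, -, rfl⟩ := Finset.mem_image.1 hmem
  exact Sym2.mem_mk_left s u

end StarIndicator

section WeightedDegree

variable {W : Type*} [Fintype W] (H : SimpleGraph W) [DecidableRel H.Adj]

lemma weightedDeg_add (f f' : Sym2 W → ℕ) (v : W) :
    weightedDeg H (f + f') v = weightedDeg H f v + weightedDeg H f' v :=
  Finset.sum_add_distrib

lemma weightedDeg_smul (c : ℕ) (f : Sym2 W → ℕ) (v : W) :
    weightedDeg H (c • f) v = c * weightedDeg H f v :=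
  (Finset.mul_sum _ _ _).symm

lemma weightedDeg_le_mul_degree {f : Sym2 W → ℕ} {c : ℕ} {v : W}
    (hf : ∀ u, H.Adj v u → f s(u, v) ≤ c) : weightedDeg H f v ≤ c * H.degree v := by
  rw [mul_comm, ← H.card_neighborFinset_eq_degree]
  exact Finset.sum_le_card_nsmul _ _ _ fun u hu ↦ hf u ((H.mem_neighborFinset v u).1 hu)

variable [DecidableEq W] {s : W} {J : Finset W}

lemma weightedDeg_starIndicator_self (hJ : J ⊆ H.neighborFinset s) :
    weightedDeg H (starIndicator s J) s = #J := by
  simp only [weightedDeg, Sym2.eq_swap, starIndicator_mk]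
  rw [Finset.sum_boole, Finset.filter_mem_eq_inter, Finset.inter_eq_right.2 hJ, Nat.cast_id]

lemma weightedDeg_starIndicator_of_ne (hJ : J ⊆ H.neighborFinset s) {v : W} (hv : v ≠ s) :
    weightedDeg H (starIndicator s J) v = if v ∈ J then 1 else 0 := by
  have zero_of_ne (u : W) (hu : u ≠ s) : starIndicator s J s(u, v) = 0 :=
    starIndicator_of_notMem (by simp [hu.symm, hv.symm]) J
  have value_at_center : starIndicator s J s(s, v) = if v ∈ J then 1 else 0 :=
    starIndicator_mk s v J
  by_cases hadj : H.Adj v s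
  · rw [← value_at_center]
    exact Finset.sum_eq_single_of_mem s ((H.mem_neighborFinset v s).2 hadj)
      fun u _ hu ↦ zero_of_ne u hu
  · rw [if_neg fun h ↦ hadj ((H.mem_neighborFinset s v).1 (hJ h)).symm]
    exact Finset.sum_eq_zero fun u hu ↦ zero_of_ne u fun hus ↦
      hadj (hus ▸ (H.mem_neighborFinset v u).1 hu)

end WeightedDegree

section Sequential

variable {W : Type*} [Fintype W] [DecidableEq W]

/-- The invariant of the sequential weighting of `H` with offsets `b`, after the vertices of `P`
have been processed: the total `b u + weightedDeg H f u` of a processed vertex lies in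
`{y u, y u + g}`, where the targets `y u` are distinct and `y u / g` has residue `2` or `0` modulo
`m` according to whether `u` is a root (an element of `Z`) or not. The bounds on `f` leave room
for changing the weight of an edge once at each of its endpoints. -/
structure IsPartialAssignment (H : SimpleGraph W) [DecidableRel H.Adj] (g m : ℕ) (b : W → ℕ)
    (Z P : Finset W) (f : Sym2 W → ℕ) (y : W → ℕ) : Prop where
  weight_untouched : ∀ u ∉ P, ∀ v ∉ P, f s(u, v) = g
  weight_boundary : ∀ u ∉ P, ∀ v ∈ P, g ≤ f s(u, v) ∧ f s(u, v) < 3 * g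
  weight_lt : ∀ e, f e < 4 * g
  total : ∀ u ∈ P, b u + weightedDeg H f u = y u ∨ b u + weightedDeg H f u = y u + g
  injOn : Set.InjOn y P
  residue : ∀ u ∈ P, y u / g % m = if u ∈ Z then 2 else 0

namespace IsPartialAssignment

variable {H : SimpleGraph W} [DecidableRel H.Adj] {g m : ℕ} {b : W → ℕ} {Z P : Finset W}
  {f : Sym2 W → ℕ} {y : W → ℕ}

lemma empty (hg : 0 < g) : IsPartialAssignment H g m b Z ∅ (fun _ ↦ g) 0 where
  weight_untouched _ _ _ _ := rfl
  weight_boundary _ _ v hv := absurd hv (Finset.notMem_empty v)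
  weight_lt _ := by omega
  total u hu := absurd hu (Finset.notMem_empty u)
  injOn := by simp
  residue u hu := absurd hu (Finset.notMem_empty u)

lemma exists_lowered (hf : IsPartialAssignment H g m b Z P f y) {s : W} (hs : s ∉ P) :
    ∃ f₁ neg, neg ⊆ H.neighborFinset s ∩ P ∧ f = f₁ + g • starIndicator s neg ∧
      ∀ u ∈ H.neighborFinset s ∩ P, b u + weightedDeg H f₁ u = y u := by
  let neg := {u ∈ H.neighborFinset s ∩ P | b u + weightedDeg H f u = y u + g}
  have neg_subset : neg ⊆ H.neighborFinset s ∩ P := Finset.filter_subset _ _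
  have le_weight : g • starIndicator s neg ≤ f := by
    intro e
    by_cases he : e ∈ neg.image fun u ↦ s(s, u)
    · obtain ⟨u, hu, rfl⟩ := Finset.mem_image.1 he
      simpa [starIndicator_mk, hu] using
        (hf.weight_boundary s hs u (Finset.mem_inter.1 (neg_subset hu)).2).1
    · simp [starIndicator, he]
  have f_eq := (tsub_add_cancel_of_le le_weight).symm
  refine ⟨f - g • starIndicator s neg, neg, neg_subset, f_eq, fun u hu ↦ ?_⟩
  have hu' := Finset.mem_inter.1 hu
  have degree_eq := congrArg (weightedDeg H · u) f_eq
  simp only [weightedDeg_add, weightedDeg_smul] at degree_eq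
  rw [weightedDeg_starIndicator_of_ne H (neg_subset.trans Finset.inter_subset_left)
    (ne_of_mem_of_not_mem hu'.2 hs)] at degree_eq
  have mem_neg : u ∈ neg ↔ b u + weightedDeg H f u = y u + g := by
    simp only [neg, Finset.mem_filter, hu, true_and]
  obtain low | high := hf.total u hu'.2
  · have : u ∉ neg ∨ g = 0 := by
      rw [mem_neg]
      omega
    obtain hneg | rfl := this
    · simp only [hneg, if_false] at degree_eq
      omega
    · omega
  · rw [if_pos (mem_neg.2 high)] at degree_eq
    omega

variable {f₁ : Sym2 W → ℕ} {neg J Q : Finset W} {s : W} {a : ℕ}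

lemma total_insert (hf : IsPartialAssignment H g m b Z P f y) (hs : s ∉ P)
    (hneg : neg ⊆ H.neighborFinset s ∩ P) (hf₁ : f = f₁ + g • starIndicator s neg)
    (hlow : ∀ u ∈ H.neighborFinset s ∩ P, b u + weightedDeg H f₁ u = y u)
    (hJ : J ⊆ H.neighborFinset s) (hQ : Q ⊆ H.neighborFinset s \ P) {u : W} (hu : u ∈ P) :
    b u + weightedDeg H (f₁ + g • starIndicator s J + a • starIndicator s Q) u = y u ∨
      b u + weightedDeg H (f₁ + g • starIndicator s J + a • starIndicator s Q) u = y u + g := by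
  have hus : u ≠ s := ne_of_mem_of_not_mem hu hs
  have huQ : u ∉ Q := fun h ↦ (Finset.mem_sdiff.1 (hQ h)).2 hu
  simp only [weightedDeg_add, weightedDeg_smul, weightedDeg_starIndicator_of_ne H hJ hus,
    weightedDeg_starIndicator_of_ne H (hQ.trans Finset.sdiff_subset) hus, huQ, if_false, mul_zero,
    add_zero]
  by_cases hadj : u ∈ H.neighborFinset s
  · have := hlow u (Finset.mem_inter.2 ⟨hadj, hu⟩)
    split_ifs <;> omega
  · have := hf.total u hu
    have huneg : u ∉ neg := fun h ↦ hadj (Finset.mem_inter.1 (hneg h)).1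
    simp only [hf₁, weightedDeg_add, weightedDeg_smul, weightedDeg_starIndicator_of_ne H
      (hneg.trans Finset.inter_subset_left) hus, huneg, if_false, mul_zero, add_zero] at this
    simpa only [if_neg fun h ↦ hadj (hJ h), mul_zero, add_zero] using this

lemma weight_at_insert (hf : IsPartialAssignment H g m b Z P f y) (hs : s ∉ P)
    (hneg : neg ⊆ H.neighborFinset s ∩ P) (hf₁ : f = f₁ + g • starIndicator s neg)
    (hQ : Q ⊆ H.neighborFinset s \ P) (ha : a < g) (u : W) :
    (u ∈ P → (f₁ + g • starIndicator s J + a • starIndicator s Q) s(s, u) < 4 * g) ∧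
    (u ∉ P → g ≤ (f₁ + g • starIndicator s J + a • starIndicator s Q) s(s, u) ∧
      (f₁ + g • starIndicator s J + a • starIndicator s Q) s(s, u) < 3 * g) := by
  have old_eq := congrFun hf₁ s(s, u)
  simp only [Pi.add_apply, Pi.smul_apply, starIndicator_mk, smul_eq_mul] at old_eq ⊢
  constructor <;> intro hu
  · have huQ : u ∉ Q := fun h ↦ (Finset.mem_sdiff.1 (hQ h)).2 hu
    have := (hf.weight_boundary s hs u hu).2
    split_ifs at * <;> omega
  · have huneg : u ∉ neg := fun h ↦ hu (Finset.mem_inter.1 (hneg h)).2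
    have := hf.weight_untouched s hs u hu
    split_ifs at * <;> omega

lemma insert_vertex (hf : IsPartialAssignment H g m b Z P f y) (hs : s ∉ P)
    (hneg : neg ⊆ H.neighborFinset s ∩ P) (hf₁ : f = f₁ + g • starIndicator s neg)
    (hlow : ∀ u ∈ H.neighborFinset s ∩ P, b u + weightedDeg H f₁ u = y u)
    (hJ : J ⊆ H.neighborFinset s) (hQ : Q ⊆ H.neighborFinset s \ P) (ha : a < g)
    {z : ℕ} (hz : b s + weightedDeg H f₁ s + a * #Q + g * #J = z)
    (hzy : ∀ u ∈ P, y u ≠ z) (hres : z / g % m = if s ∈ Z then 2 else 0) :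
    IsPartialAssignment H g m b Z (insert s P)
      (f₁ + g • starIndicator s J + a • starIndicator s Q) (Function.update y s z) := by
  have at_s (u : W) := hf.weight_at_insert (J := J) hs hneg hf₁ hQ ha u
  have off_s {e : Sym2 W} (he : s ∉ e) :
      (f₁ + g • starIndicator s J + a • starIndicator s Q) e = f e := by
    simp [hf₁, starIndicator_of_notMem he]
  have y_eq {u : W} (hu : u ∈ P) : Function.update y s z u = y u :=
    Function.update_of_ne (ne_of_mem_of_not_mem hu hs) z y
  refine ⟨fun u hu v hv ↦ ?_, fun u hu v hv ↦ ?_, fun e ↦ ?_, fun u hu ↦ ?_, ?_, fun u hu ↦ ?_⟩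
  · rw [Finset.mem_insert, not_or] at hu hv
    rw [off_s (by simp [Ne.symm hu.1, Ne.symm hv.1])]
    exact hf.weight_untouched u hu.2 v hv.2
  · rw [Finset.mem_insert, not_or] at hu
    obtain rfl | hv := Finset.mem_insert.1 hv
    · rw [Sym2.eq_swap]
      exact (at_s u).2 hu.2
    · rw [off_s (by simp [Ne.symm hu.1, (ne_of_mem_of_not_mem hv hs).symm])]
      exact hf.weight_boundary u hu.2 v hv
  · by_cases he : s ∈ e
    · obtain ⟨u, rfl⟩ := Sym2.mem_iff_exists.1 he
      by_cases hu : u ∈ P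
      · exact (at_s u).1 hu
      · exact ((at_s u).2 hu).2.trans_le (by omega)
    · exact off_s he ▸ hf.weight_lt e
  · obtain rfl | hu := Finset.mem_insert.1 hu
    · left
      simp only [weightedDeg_add, weightedDeg_smul, weightedDeg_starIndicator_self H hJ,
        weightedDeg_starIndicator_self H (hQ.trans Finset.sdiff_subset), Function.update_self]
      omega
    · rw [y_eq hu]
      exact hf.total_insert hs hneg hf₁ hlow hJ hQ hu
  · rw [Finset.coe_insert, Set.injOn_insert hs]
    refine ⟨hf.injOn.congr fun u hu ↦ (y_eq hu).symm, ?_⟩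
    rintro ⟨u, hu, huz⟩
    rw [y_eq hu, Function.update_self] at huz
    exact hzy u hu huz
  · obtain rfl | hu := Finset.mem_insert.1 hu
    · rwa [Function.update_self]
    · rw [y_eq hu]
      exact hf.residue u hu

lemma target_bounds (hf : IsPartialAssignment H g m b Z P f y) {u : W} (hu : u ∈ P) :
    b u ≤ y u + g ∧ y u ≤ b u + 4 * g * H.degree u := by
  have := weightedDeg_le_mul_degree H (v := u) fun v _ ↦ (hf.weight_lt s(v, u)).le
  have := hf.total u hu
  omega

lemma injective_total (hf : IsPartialAssignment H g m b Z Finset.univ f y) (hg : 0 < g)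
    (hm : 4 ≤ m) : Function.Injective fun u ↦ b u + weightedDeg H f u := by
  have residue_ne (u v : W) : y u ≠ y v + g := fun h ↦ by
    have hu := hf.residue u (Finset.mem_univ u)
    have hv := hf.residue v (Finset.mem_univ v)
    rw [h, Nat.add_div_right _ hg, ← Nat.mod_add_mod, hv] at hu
    split_ifs at hu <;> rw [Nat.mod_eq_of_lt (by omega)] at hu <;> omega
  intro u v (huv : b u + weightedDeg H f u = b v + weightedDeg H f v)
  refine hf.injOn (Finset.mem_coe.2 (Finset.mem_univ u)) (Finset.mem_coe.2 (Finset.mem_univ v)) ?_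
  have := hf.total u (Finset.mem_univ u)
  have := hf.total v (Finset.mem_univ v)
  have := residue_ne u v
  have := residue_ne v u
  omega

lemma total_div_mod_lt (hf : IsPartialAssignment H g m b Z P f y) (hg : 0 < g) {u : W}
    (hu : u ∈ P) : (b u + weightedDeg H f u) / g % m < 4 := by
  have hres := hf.residue u hu
  obtain h | h := hf.total u hu
  · rw [h, hres]
    split_ifs <;> omega
  · rw [h, Nat.add_div_right _ hg, ← Nat.mod_add_mod, hres]
    exact (Nat.mod_le _ _).trans_lt (by split_ifs <;> omega)

section Step

variable {h R : ℕ}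

lemma exists_fresh_target (hf : IsPartialAssignment H g m b Z P f y) (hm : 4 ≤ m)
    (hR : m * R ≤ h + 1) (hZ : #Z < R)
    (hconf : ∀ x, #{u | b u ≤ x + g * (h + 2) ∧ x ≤ b u + 4 * g * H.degree u} < g * R)
    (s : W) (x : ℕ) :
    ∃ a < g, ∃ j ≤ h, (s ∈ Z → a = 0) ∧
      (x + a + g * j) / g % m = (if s ∈ Z then 2 else 0) ∧ ∀ u ∈ P, y u ≠ x + a + g * j := by
  by_cases hs : s ∈ Z
  · have hg : 0 < g := pos_of_mul_pos_left ((Nat.zero_le _).trans_lt (hconf x)) R.zero_le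
    obtain ⟨a, ha, j, hj, hres, hfresh⟩ := exists_add_mul_div_mod_eq_notMem (g := g) (g' := 1)
      (τ := 2) hg hR (by omega) x
      (F := Z.image y) (by simpa using Finset.card_image_le.trans_lt hZ)
    refine ⟨a, by omega, j, hj, fun _ ↦ by omega, by rw [hres, if_pos hs], fun u hu hy ↦ ?_⟩
    refine hfresh (hy ▸ Finset.mem_image_of_mem y ?_)
    by_contra huZ
    have := hf.residue u hu
    rw [if_neg huZ, hy, hres] at this
    omega
  · obtain ⟨a, ha, j, hj, hres, hfresh⟩ := exists_add_mul_div_mod_eq_notMem (τ := 0) le_rfl hR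
      (by omega) x (F := Finset.image y {u | b u ≤ x + g * (h + 2) ∧ x ≤ b u + 4 * g * H.degree u})
      (Finset.card_image_le.trans_lt (hconf x))
    refine ⟨a, ha, j, hj, fun h ↦ absurd h hs, by rw [hres, if_neg hs], fun u hu hy ↦ ?_⟩
    have hbounds := hf.target_bounds hu
    have : g * j ≤ g * h := Nat.mul_le_mul_left g hj
    refine hfresh (hy ▸ Finset.mem_image_of_mem y (Finset.mem_filter.2 ⟨Finset.mem_univ u, ?_⟩))
    rw [mul_add]
    omega

lemma exists_insert_vertex (hf : IsPartialAssignment H g m b Z P f y) (hm : 4 ≤ m)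
    (hR : m * R ≤ h + 1) (hZ : #Z < R)
    (hconf : ∀ x, #{u | b u ≤ x + g * (h + 2) ∧ x ≤ b u + 4 * g * H.degree u} < g * R)
    {s : W} (hs : s ∉ P) (hdeg : h ≤ H.degree s) (hparent : s ∉ Z → ∃ p ∉ P, H.Adj s p) :
    ∃ f' y', IsPartialAssignment H g m b Z (insert s P) f' y' := by
  obtain ⟨f₁, neg, hneg, hf₁, hlow⟩ := hf.exists_lowered hs
  obtain ⟨a, ha, j, hj, ha₀, hres, hfresh⟩ :=
    hf.exists_fresh_target hm hR hZ hconf s (b s + weightedDeg H f₁ s)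
  obtain ⟨J, hJ, rfl⟩ := Finset.exists_subset_card_eq
    (hj.trans (hdeg.trans_eq (H.card_neighborFinset_eq_degree s).symm))
  obtain ⟨Q, hQ, hQa⟩ : ∃ Q ⊆ H.neighborFinset s \ P, a * #Q = a := by
    by_cases hsZ : s ∈ Z
    · exact ⟨∅, Finset.empty_subset _, by simp [ha₀ hsZ]⟩
    · obtain ⟨p, hp, hadj⟩ := hparent hsZ
      exact ⟨{p}, by simpa using ⟨hadj, hp⟩, by simp⟩
  exact ⟨_, _, hf.insert_vertex hs hneg hf₁ hlow hJ hQ ha (by rw [hQa]) hfresh hres⟩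

end Step

end IsPartialAssignment

end Sequential

lemma exists_injective_add_weightedDeg {W : Type*} [Fintype W] (H : SimpleGraph W)
    [DecidableRel H.Adj] (b : W → ℕ) {g m h R : ℕ} (hm : 4 ≤ m) (hR : m * R ≤ h + 1)
    (hdeg : ∀ v, h ≤ H.degree v) (hcard : Fintype.card W < R * (h + 1))
    (hconf : ∀ x, #{u | b u ≤ x + g * (h + 2) ∧ x ≤ b u + 4 * g * H.degree u} < g * R) :
    ∃ f : Sym2 W → ℕ, (∀ e, f e < 4 * g) ∧
      Function.Injective (fun v ↦ b v + weightedDeg H f v) ∧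
      ∀ v, (b v + weightedDeg H f v) / g % m < 4 := by
  classical
  have hg : 0 < g := pos_of_mul_pos_left ((Nat.zero_le _).trans_lt (hconf 0)) R.zero_le
  let Z : Finset W := {v | level H v = 0}
  have hZ : #Z < R := Nat.lt_of_mul_lt_mul_right ((card_level_eq_zero_mul_le H hdeg).trans_lt hcard)
  obtain ⟨f, y, hf⟩ : ∃ f y, IsPartialAssignment H g m b Z Finset.univ f y := by
    induction (Finset.univ : Finset W) using Finset.induction_on_min_value (level H) with
    | empty => exact ⟨_, _, .empty hg⟩
    | insert s P hs hlevel ih =>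
      obtain ⟨f, y, hf⟩ := ih
      refine hf.exists_insert_vertex hm hR hZ hconf hs (hdeg s) fun hsZ ↦ ?_
      obtain ⟨p, hadj, hlt⟩ := exists_adj_level_lt H (v := s) (by simpa [Z] using hsZ)
      exact ⟨p, fun hp ↦ (hlevel p hp).not_gt hlt, hadj⟩
  exact ⟨f, hf.weight_lt, hf.injective_total hg hm,
    fun v ↦ hf.total_div_mod_lt hg (Finset.mem_univ v)⟩

section Quasirandom

lemma card_filter_fin_mem_Icc_le (n : ℕ) {α β : ℝ} (h : α ≤ β) :
    (#{x : Fin n | α ≤ (x : ℕ) ∧ ((x : ℕ) : ℝ) ≤ β} : ℝ) ≤ β - α + 1 := by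
  have hcard : #{x : Fin n | α ≤ (x : ℕ) ∧ ((x : ℕ) : ℝ) ≤ β} ≤ #(Finset.Icc ⌈α⌉ ⌊β⌋) := by
    refine Finset.card_le_card_of_injOn (fun x ↦ ((x : ℕ) : ℤ)) (fun x hx ↦ ?_)
      fun x _ y _ hxy ↦ Fin.ext (by simpa using hxy)
    obtain ⟨hαx, hxβ⟩ := (Finset.mem_filter.1 hx).2
    exact Finset.mem_Icc.2 ⟨Int.ceil_le.2 (by exact_mod_cast hαx),
      Int.le_floor.2 (by exact_mod_cast hxβ)⟩
  calc (#{x : Fin n | α ≤ (x : ℕ) ∧ ((x : ℕ) : ℝ) ≤ β} : ℝ)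
      ≤ ((⌊β⌋ + 1 - ⌈α⌉).toNat : ℤ) := by
        rw [Int.card_Icc] at hcard
        exact_mod_cast hcard
    _ ≤ β - α + 1 := by
        rw [Int.toNat_eq_max, Int.cast_max, max_le_iff]
        push_cast
        constructor <;> linarith [Int.floor_le β, Int.le_ceil α]

lemma card_filter_fin_affine_mem_Icc_le (n : ℕ) {s : ℝ} (hs : 0 < s) (r : ℝ) {α β : ℝ}
    (h : α ≤ β) :
    (#{x : Fin n | α ≤ r + s * (x : ℕ) / n ∧ r + s * (x : ℕ) / n ≤ β} : ℝ)
      ≤ n * ((β - α) / s) + 1 := by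
  obtain rfl | hn := n.eq_zero_or_pos
  · simp
  have hn : (0 : ℝ) < n := by exact_mod_cast hn
  have hiff (x : Fin n) : (α ≤ r + s * (x : ℕ) / n ∧ r + s * (x : ℕ) / n ≤ β) ↔
      (α - r) * n / s ≤ (x : ℕ) ∧ ((x : ℕ) : ℝ) ≤ (β - r) * n / s := by
    rw [div_le_iff₀ hs, le_div_iff₀ hs, ← le_div_iff₀ hn, ← div_le_iff₀ hn, mul_comm s,
      sub_le_iff_le_add', le_sub_iff_add_le']
  simp only [hiff]
  refine (card_filter_fin_mem_Icc_le n (by gcongr)).trans_eq ?_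
  ring

/-- The labels in `{0, …, n - 1}` that form a heavy edge with a vertex of label `x`. -/
def heavyLabels (n x : ℕ) : Finset (Fin n) := {y | n ≤ y + x}

lemma card_heavyLabels {n x : ℕ} (hx : x ≤ n) : #(heavyLabels n x) = x := by
  have hmap : (heavyLabels n x).map Fin.valEmbedding = Finset.Ico (n - x) n := by
    ext y
    simp only [heavyLabels, Finset.mem_map, Finset.mem_filter_univ, Fin.valEmbedding_apply,
      Finset.mem_Ico]
    exact ⟨fun ⟨z, _, hzy⟩ ↦ by omega, fun hy ↦ ⟨⟨y, hy.2⟩, by dsimp only; omega, rfl⟩⟩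
  rw [← Finset.card_map, hmap, Nat.card_Ico, Nat.sub_sub_self hx]

variable {V : Type*} [Fintype V] (G : SimpleGraph V) [DecidableRel G.Adj]

/-- The expected weight of `v`, given that `v` has label `x`, when all other vertices get
independent uniform labels in `{0, …, n - 1}` and the edge `uv` gets weight `K + 1` or `1`
according to whether or not the labels of `u` and `v` add up to at least `n`. -/
def expectedWeight (K : ℕ) (v : V) (x : ℕ) : ℝ :=
  G.degree v + K * G.degree v * x / Fintype.card V

/-- The set of labels for which the expected weight of `v` lies in `[α, β]`. -/
def labelWindow (K : ℕ) (v : V) (α β : ℝ) : Finset (Fin (Fintype.card V)) :=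
  {x | α ≤ expectedWeight G K v x ∧ expectedWeight G K v x ≤ β}

variable {G} {K : ℕ} {L : ℝ}

lemma card_labelWindow_le (hK : 0 < K) {v : V} (hv : 0 < G.degree v) {α β : ℝ} (h : α ≤ β) :
    (#(labelWindow G K v α β) : ℝ) ≤ Fintype.card V * ((β - α) / (K * G.degree v)) + 1 :=
  card_filter_fin_affine_mem_Icc_le _ (by positivity) _ h

lemma expectedWeight_le (v : V) {x : ℕ} (hx : x ≤ Fintype.card V) :
    expectedWeight G K v x ≤ (K + 1) * G.degree v := by
  have hx : (x : ℝ) / Fintype.card V ≤ 1 := div_le_one_of_le₀ (by exact_mod_cast hx) (by simp)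
  have := mul_le_mul_of_nonneg_left hx (by positivity : (0 : ℝ) ≤ K * G.degree v)
  rw [expectedWeight, mul_div_assoc]
  linarith

lemma sum_card_labelWindow_div_le (hK : 0 < K) (hL : 0 ≤ L) (hδ : 0 < G.minDegree) {a c : ℝ}
    (hac : a ≤ c) :
    ∑ v : V, (#(labelWindow G K v (a - K * L * √(G.degree v)) (c + K * L * √(G.degree v))) : ℝ)
        / Fintype.card V
      ≤ Fintype.card V * ((c - a) / (K * G.minDegree) + 2 * L / √G.minDegree) + 1 := by
  have hδr : (0 : ℝ) < G.minDegree := by exact_mod_cast hδ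
  have hbound (v : V) :
      (#(labelWindow G K v (a - K * L * √(G.degree v)) (c + K * L * √(G.degree v))) : ℝ)
          / Fintype.card V
        ≤ (c - a) / (K * G.minDegree) + 2 * L / √G.minDegree + 1 / Fintype.card V := by
    have hn : (0 : ℝ) < Fintype.card V := by exact_mod_cast Fintype.card_pos_iff.2 ⟨v⟩
    have hdeg : (G.minDegree : ℝ) ≤ G.degree v := by exact_mod_cast G.minDegree_le_degree v
    have hdpos : (0 : ℝ) < G.degree v := hδr.trans_le hdeg
    have hKL : 0 ≤ K * L * √(G.degree v) := by positivity
    calc _ ≤ (Fintype.card V * ((c + K * L * √(G.degree v) - (a - K * L * √(G.degree v)))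
            / (K * G.degree v)) + 1) / Fintype.card V := by
          gcongr
          exact card_labelWindow_le hK (by exact_mod_cast hdpos) (by linarith)
      _ = (c - a) / (K * G.degree v) + 2 * L / √(G.degree v) + 1 / Fintype.card V := by
          rw [add_div, mul_div_cancel_left₀ _ hn.ne']
          congr 1
          field_simp
          linear_combination 2 * K * L * Real.mul_self_sqrt hdpos.le
      _ ≤ _ := by
          have := sub_nonneg.2 hac
          gcongr
  refine (Finset.sum_le_sum fun v _ ↦ hbound v).trans ?_
  rw [Finset.sum_const, Finset.card_univ, nsmul_eq_mul, mul_add _ _ (1 / _)]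
  gcongr
  exact (mul_one_div _ _).trans_le (div_self_le_one _)

lemma sum_card_labelWindow_div_sq_le (hK : 0 < K) (hδ : 0 < G.minDegree) (a : ℝ) :
    ∑ v : V, (#(labelWindow G K v (a - 4 * G.degree v) (a + 5 * G.degree v)) : ℝ)
        / (Fintype.card V * K)
      ≤ 9 * Fintype.card V / K ^ 2 + 1 := by
  have hKr : (1 : ℝ) ≤ K := by exact_mod_cast hK
  have hbound (v : V) :
      (#(labelWindow G K v (a - 4 * G.degree v) (a + 5 * G.degree v)) : ℝ) / (Fintype.card V * K)
        ≤ 9 / K ^ 2 + 1 / Fintype.card V := by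
    have hn : (0 : ℝ) < Fintype.card V := by exact_mod_cast Fintype.card_pos_iff.2 ⟨v⟩
    have hdpos : (0 : ℝ) < G.degree v := by
      exact_mod_cast hδ.trans_le (G.minDegree_le_degree v)
    calc _ ≤ (Fintype.card V * ((a + 5 * G.degree v - (a - 4 * G.degree v))
            / (K * G.degree v)) + 1) / (Fintype.card V * K) := by
          gcongr
          exact card_labelWindow_le hK (by exact_mod_cast hdpos) (by linarith)
      _ = 9 / K ^ 2 + 1 / (Fintype.card V * K) := by field_simp; ring
      _ ≤ _ := by gcongr; exact le_mul_of_one_le_right hn.le hKr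
  refine (Finset.sum_le_sum fun v _ ↦ hbound v).trans ?_
  rw [Finset.sum_const, Finset.card_univ, nsmul_eq_mul, mul_add]
  refine add_le_add (le_of_eq (by ring)) ((mul_one_div _ _).trans_le (div_self_le_one _))

lemma two_mul_card_event_le {n : ℕ} (hn : 0 < n) (K : ℕ) :
    2 * (n * n + (n + ((n * (K + 5) + 1) * (n * (K + 5) + 1) + (n * (K + 5) + 1))))
      ≤ 6 * (n * (K + 6)) ^ 2 := by
  have hR : n * (K + 5) + 1 ≤ n * (K + 6) := by linarith [mul_add n (K + 5) 1]
  have hR1 : 1 ≤ n * (K + 6) := by omega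
  have : n + n * (K + 5) + 1 ≤ 2 * (n * (K + 6)) := by nlinarith
  nlinarith [Nat.mul_le_mul hR hR, Nat.le_mul_of_pos_right n (by omega : 0 < K + 6)]

lemma exists_labels_concentrated [Nonempty V] [NeZero K] (hL : 0 ≤ L)
    (hcard : 6 * (Fintype.card V * (K + 6)) ^ 2 * Real.exp (-2 * L ^ 2) < 1) :
    ∃ ω : V → Fin (Fintype.card V) × Fin K,
      (∀ v (x : Fin (Fintype.card V)),
        |(#{u ∈ G.neighborFinset v | (ω u).1 ∈ heavyLabels _ x} : ℝ)
          - G.degree v * (x / Fintype.card V)| ≤ L * √(G.degree v)) ∧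
      (∀ v, |(#{u ∈ G.neighborFinset v | (ω u).2 = 0} : ℝ) - G.degree v * (1 / K)|
        ≤ L * √(G.degree v)) ∧
      (∀ a ≤ Fintype.card V * (K + 5), ∀ c ≤ Fintype.card V * (K + 5),
        |(#{v | (ω v).1 ∈ labelWindow G K v (a - K * L * √(G.degree v))
            (c + K * L * √(G.degree v))} : ℝ)
          - ∑ v, (#(labelWindow G K v (a - K * L * √(G.degree v))
            (c + K * L * √(G.degree v))) : ℝ) / Fintype.card V| ≤ L * √(Fintype.card V)) ∧
      ∀ a ≤ Fintype.card V * (K + 5),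
        |(#{v | (ω v).1 ∈ labelWindow G K v (a - 4 * G.degree v) (a + 5 * G.degree v) ∧
            (ω v).2 = 0} : ℝ)
          - ∑ v, (#(labelWindow G K v (a - 4 * G.degree v) (a + 5 * G.degree v)) : ℝ)
            / (Fintype.card V * K)| ≤ L * √(Fintype.card V) := by
  let R := Fintype.card V * (K + 5)
  let T : (V × Fin (Fintype.card V)) ⊕ V ⊕ (Fin (R + 1) × Fin (R + 1)) ⊕ Fin (R + 1) →
      Finset V :=
    Sum.elim (fun i ↦ G.neighborFinset i.1) (Sum.elim (fun v ↦ G.neighborFinset v)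
      fun _ ↦ Finset.univ)
  let P : (V × Fin (Fintype.card V)) ⊕ V ⊕ (Fin (R + 1) × Fin (R + 1)) ⊕ Fin (R + 1) → V →
      Finset (Fin (Fintype.card V) × Fin K) :=
    Sum.elim (fun i _ ↦ heavyLabels _ i.2 ×ˢ Finset.univ) <|
    Sum.elim (fun _ _ ↦ Finset.univ ×ˢ {0}) <|
    Sum.elim (fun i u ↦ labelWindow G K u ((i.1 : ℕ) - K * L * √(G.degree u))
      ((i.2 : ℕ) + K * L * √(G.degree u)) ×ˢ Finset.univ)
    (fun i u ↦ labelWindow G K u ((i : ℕ) - 4 * G.degree u) ((i : ℕ) + 5 * G.degree u) ×ˢ {0})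
  obtain ⟨ω, hω⟩ := exists_forall_abs_card_filter_sub_le T P hL (by
    refine lt_of_le_of_lt ?_ hcard
    gcongr ?_ * _
    simp only [Fintype.card_sum, Fintype.card_prod, Fintype.card_fin]
    exact_mod_cast two_mul_card_event_le Fintype.card_pos K)
  have hK : (K : ℝ) ≠ 0 := NeZero.ne _
  have hn : (Fintype.card V : ℝ) ≠ 0 := by simp
  simp only [Fintype.card_prod, Fintype.card_fin, Nat.cast_mul] at hω
  refine ⟨ω, fun v x ↦ ?_, fun v ↦ ?_, fun a ha c hc ↦ ?_, fun a ha ↦ ?_⟩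
  · simpa [T, P, card_heavyLabels x.2.le, mul_div_mul_right _ _ hK] using hω (.inl (v, x))
  · simpa [T, P, Finset.mem_product, -Finset.product_singleton, div_mul_cancel_left₀ hn]
      using hω (.inr (.inl v))
  · simpa [T, P, mul_div_mul_right _ _ hK] using
      hω (.inr (.inr (.inl (⟨a, Nat.lt_succ_of_le ha⟩, ⟨c, Nat.lt_succ_of_le hc⟩))))
  · simpa [T, P, Finset.mem_product, -Finset.product_singleton] using
      hω (.inr (.inr (.inr ⟨a, Nat.lt_succ_of_le ha⟩)))

/-- The properties of random vertex labels `X`, uniform in `{0, …, n - 1}`, and of a random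
vertex set `S` of density `1 / K` that the construction relies on. The number `L` measures the
deviations in units of the standard deviation. -/
structure IsQuasirandom [DecidableEq V] (G : SimpleGraph V) [DecidableRel G.Adj] (K : ℕ) (L : ℝ)
    (X : V → ℕ) (S : Finset V) : Prop where
  abs_card_heavy_sub_le (v : V) :
    |(#{u ∈ G.neighborFinset v | Fintype.card V ≤ X u + X v} : ℝ)
      - G.degree v * X v / Fintype.card V| ≤ L * √(G.degree v)
  abs_card_reserve_sub_le (v : V) :
    |(#{u ∈ G.neighborFinset v | u ∈ S} : ℝ) - G.degree v / K| ≤ L * √(G.degree v)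
  card_window_le {a c : ℕ} (hac : a ≤ c) (hc : c ≤ Fintype.card V * (K + 1)) :
    (#{v | a - K * L * √(G.degree v) ≤ expectedWeight G K v (X v) ∧
        expectedWeight G K v (X v) ≤ c + K * L * √(G.degree v)} : ℝ)
      ≤ Fintype.card V * ((c - a) / (K * G.minDegree) + 2 * L / √G.minDegree) + 1
        + L * √(Fintype.card V)
  card_reserve_window_le (a : ℕ) :
    (#{v ∈ S | a - 4 * G.degree v ≤ expectedWeight G K v (X v) ∧
        expectedWeight G K v (X v) ≤ a + 5 * G.degree v} : ℝ)
      ≤ 9 * Fintype.card V / K ^ 2 + 1 + L * √(Fintype.card V)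


lemma exists_isQuasirandom [DecidableEq V] (hK : 0 < K) (hL : 0 ≤ L) (hδ : 0 < G.minDegree)
    (hcard : 6 * (Fintype.card V * (K + 6)) ^ 2 * Real.exp (-2 * L ^ 2) < 1) :
    ∃ X S, IsQuasirandom G K L X S := by
  have : Nonempty V := by
    by_contra hV
    rw [not_nonempty_iff] at hV
    exact hδ.ne' G.minDegree_of_subsingleton
  have : NeZero K := ⟨hK.ne'⟩
  obtain ⟨ω, hheavy, hreserve, hwindow, hreserveWindow⟩ :=
    exists_labels_concentrated (G := G) hL hcard
  refine ⟨fun v ↦ (ω v).1, Finset.univ.filter (fun v ↦ (ω v).2 = 0), ⟨fun v ↦ ?_, fun v ↦ ?_,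
    fun {a c} hac hc ↦ ?_, fun a ↦ ?_⟩⟩
  · simpa [heavyLabels, mul_div_assoc] using hheavy v (ω v).1
  · simpa [div_eq_mul_inv] using hreserve v
  · have hc' : c ≤ Fintype.card V * (K + 5) := hc.trans (by gcongr; omega)
    have hmean := sum_card_labelWindow_div_le (G := G) hK hL hδ (Nat.cast_le (α := ℝ).2 hac)
    have hdev := (abs_le.1 (hwindow a (hac.trans hc') c hc')).2
    simp only [labelWindow, Finset.mem_filter_univ] at hmean hdev
    linarith
  · by_cases ha : a ≤ Fintype.card V * (K + 5)
    · have hmean := sum_card_labelWindow_div_sq_le (G := G) hK hδ a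
      have hdev := (abs_le.1 (hreserveWindow a ha)).2
      simp only [labelWindow, Finset.mem_filter_univ] at hmean hdev
      rw [Finset.filter_filter]
      simp only [and_comm (a := (ω _).2 = 0)]
      linarith
    · rw [Finset.filter_eq_empty_iff.2, Finset.card_empty, Nat.cast_zero]
      · positivity
      rintro v - ⟨hav, -⟩
      have hdeg : G.degree v ≤ Fintype.card V := (G.degree_lt_card_verts v).le
      have hwt := expectedWeight_le (G := G) (K := K) v (ω v).1.2.le
      have hle : (a : ℝ) ≤ Fintype.card V * (K + 5) := calc
        (a : ℝ) ≤ G.degree v * (K + 5) := by linarith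
        _ ≤ Fintype.card V * (K + 5) := by gcongr
      exact ha (by exact_mod_cast hle)

end Quasirandom

section Gluing

variable {V : Type*} [Fintype V] (G : SimpleGraph V) [DecidableRel G.Adj]

section Extend

variable {W : Type*} (φ : W ↪ V)

lemma weightedDeg_extend_of_notMem_range (f : Sym2 W → ℕ) {v : V} (hv : v ∉ Set.range φ) :
    weightedDeg G (Function.extend (Sym2.map φ) f 0) v = 0 := by
  refine Finset.sum_eq_zero fun u _ ↦ Function.extend_apply' _ _ _ ?_
  rintro ⟨e, he⟩
  obtain ⟨x, -, hx⟩ := Sym2.mem_map.1 (he ▸ Sym2.mem_mk_right u v)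
  exact hv ⟨x, hx⟩

variable [Fintype W]

lemma weightedDeg_extend_apply (f : Sym2 W → ℕ) (w : W) :
    weightedDeg G (Function.extend (Sym2.map φ) f 0) (φ w) = weightedDeg (G.comap φ) f w := by
  have hsub : ((G.comap φ).neighborFinset w).map φ ⊆ G.neighborFinset (φ w) := fun u hu ↦ by
    obtain ⟨x, hx, rfl⟩ := Finset.mem_map.1 hu
    simpa using hx
  have zero_off_range (u : V) (hadj : u ∈ G.neighborFinset (φ w))
      (hu : u ∉ ((G.comap φ).neighborFinset w).map φ) :
      Function.extend (Sym2.map φ) f 0 s(u, φ w) = 0 := by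
    refine Function.extend_apply' _ _ _ ?_
    rintro ⟨e, he⟩
    obtain ⟨x, -, rfl⟩ := Sym2.mem_map.1 (he ▸ Sym2.mem_mk_left u (φ w))
    exact hu (Finset.mem_map_of_mem φ (by simpa using hadj))
  rw [weightedDeg, ← Finset.sum_subset hsub zero_off_range, Finset.sum_map]
  exact Finset.sum_congr rfl fun x _ ↦
    (Sym2.map.injective φ.injective).extend_apply f 0 s(x, w)

end Extend

variable {S : Finset V}

lemma isIrregularAssignment_add_extend {f : Sym2 V → ℕ} {f' : Sym2 S → ℕ} {k : ℕ} {P : ℕ → Prop}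
    (hpos : ∀ e, 1 ≤ f e) (hle : ∀ e, f e ≤ k) (hone : ∀ e ∈ S.sym2, f e = 1)
    (hlt : ∀ e, f' e < k)
    (hinj : Set.InjOn (weightedDeg G f) {v | v ∉ S}) (hP : ∀ v ∉ S, P (weightedDeg G f v))
    (hinj' : Function.Injective fun v : S ↦ weightedDeg G f v
      + weightedDeg (G.comap (Function.Embedding.subtype (· ∈ S))) f' v)
    (hP' : ∀ v : S, ¬ P (weightedDeg G f v
      + weightedDeg (G.comap (Function.Embedding.subtype (· ∈ S))) f' v)) :
    IsIrregularAssignment G k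
      (f + Function.extend (Sym2.map (Function.Embedding.subtype (· ∈ S))) f' 0) := by
  set φ := Function.Embedding.subtype (· ∈ S)
  have hmem (v : S) : weightedDeg G (f + Function.extend (Sym2.map φ) f' 0) v
      = weightedDeg G f v + weightedDeg (G.comap φ) f' v :=
    (weightedDeg_add G _ _ _).trans (congrArg _ (weightedDeg_extend_apply G φ f' v))
  have hnotMem (v : V) (hv : v ∉ S) :
      weightedDeg G (f + Function.extend (Sym2.map φ) f' 0) v = weightedDeg G f v := by
    rw [weightedDeg_add, weightedDeg_extend_of_notMem_range G φ f' (by simpa [φ] using hv),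
      add_zero]
  refine ⟨fun e _ ↦ Finset.mem_Icc.2 ⟨(hpos e).trans (Nat.le_add_right _ _), ?_⟩,
    fun u v huv ↦ ?_⟩
  · by_cases he : ∃ e', Sym2.map φ e' = e
    · obtain ⟨e', rfl⟩ := he
      have hmap : Sym2.map φ e' ∈ S.sym2 := Finset.mem_sym2_iff.2 fun a ha ↦ by
        obtain ⟨x, -, rfl⟩ := Sym2.mem_map.1 ha
        exact x.2
      rw [Pi.add_apply, (Sym2.map.injective φ.injective).extend_apply, hone _ hmap]
      linarith [hlt e']
    · rw [Pi.add_apply, Function.extend_apply' _ _ _ he]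
      exact hle e
  · by_cases hu : u ∈ S <;> by_cases hv : v ∈ S
    · lift u to S using hu
      lift v to S using hv
      rw [hmem, hmem] at huv
      exact congrArg _ (hinj' huv)
    · lift u to S using hu
      exact absurd (hP v hv) (by rw [← hnotMem v hv, ← huv, hmem]; exact hP' u)
    · lift v to S using hv
      exact absurd (hP u hu) (by rw [← hnotMem u hu, huv, hmem]; exact hP' v)
    · rw [hnotMem u hu, hnotMem v hv] at huv
      exact hinj hu hv huv

variable [DecidableEq V]

lemma degree_comap_subtype (v : S) :
    (G.comap (Function.Embedding.subtype (· ∈ S))).degree v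
      = #{u ∈ G.neighborFinset v | u ∈ S} := by
  rw [← SimpleGraph.card_neighborFinset_eq_degree,
    ← Finset.card_map (Function.Embedding.subtype (· ∈ S))]
  congr 1
  ext u
  simp only [Finset.mem_map, SimpleGraph.mem_neighborFinset, SimpleGraph.comap_adj,
    Finset.mem_filter]
  exact ⟨fun ⟨x, hx, hxu⟩ ↦ hxu ▸ ⟨hx, x.2⟩, fun ⟨hadj, hu⟩ ↦ ⟨⟨u, hu⟩, hadj, rfl⟩⟩

lemma exists_weightedDeg_eq_of_notMem (f : Sym2 V → ℕ) {t : V → ℕ}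
    (hle : ∀ v ∉ S, weightedDeg G f v ≤ t v)
    (hge : ∀ v ∉ S, t v ≤ weightedDeg G f v + #{u ∈ G.neighborFinset v | u ∈ S}) :
    ∃ f' : Sym2 V → ℕ, (∀ e ∉ S.sym2, f e ≤ f' e ∧ f' e ≤ f e + 1) ∧
      (∀ e ∈ S.sym2, f' e = 1) ∧ ∀ v ∉ S, weightedDeg G f' v = t v := by
  have hraise (v : V) : ∃ J ⊆ {u ∈ G.neighborFinset v | u ∈ S},
      v ∉ S → weightedDeg G f v + #J = t v := by
    by_cases hv : v ∈ S
    · exact ⟨∅, Finset.empty_subset _, fun h ↦ absurd hv h⟩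
    · obtain ⟨J, hJ, hcard⟩ := Finset.exists_subset_card_eq
        (Nat.sub_le_iff_le_add'.2 (hge v hv))
      exact ⟨J, hJ, fun _ ↦ by have := hle v hv; omega⟩
  choose J hJ hJcard using hraise
  let raised : Finset (Sym2 V) := Sᶜ.biUnion fun v ↦ (J v).image fun u ↦ s(u, v)
  have mem_raised (u v : V) (hv : v ∉ S) : s(u, v) ∈ raised ↔ u ∈ J v := by
    simp only [raised, Finset.mem_biUnion, Finset.mem_image, Finset.mem_compl]
    refine ⟨fun ⟨x, _, y, hy, hxy⟩ ↦ ?_, fun hu ↦ ⟨v, hv, u, hu, rfl⟩⟩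
    have hyS := (Finset.mem_filter.1 (hJ x hy)).2
    obtain ⟨rfl, rfl⟩ | ⟨rfl, rfl⟩ := Sym2.eq_iff.1 hxy
    · exact hy
    · exact absurd hyS hv
  refine ⟨fun e ↦ if e ∈ S.sym2 then 1 else f e + if e ∈ raised then 1 else 0, fun e he ↦ ?_,
    fun e he ↦ if_pos he, fun v hv ↦ ?_⟩
  · simp only [if_neg he]
    split_ifs <;> omega
  · rw [← hJcard v hv]
    simp only [weightedDeg, Finset.mk_mem_sym2_iff, hv, and_false, if_false, mem_raised _ v hv,
      Finset.sum_add_distrib, Finset.sum_boole, Finset.filter_mem_eq_inter,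
      Finset.inter_eq_right.2 ((hJ v).trans (Finset.filter_subset _ _)), Nat.cast_id]

end Gluing

section Parameters

/-- The constraints linking the order `n` and minimum degree `δ` of the graph to the parameters
of the construction: residues are taken modulo `m` of blocks of length `g`, the heavy edges
have weight `K + 1`, and `L` bounds the deviations in units of the standard deviation. -/
structure IsAdmissible (n δ m g K : ℕ) (L : ℝ) : Prop where
  ten_le : 10 ≤ m
  block_eq : g = 100 * m
  heavy_eq : K = 4 * g
  card_le : (n + 4000 * δ : ℝ) ≤ K * δ
  one_le : 1 ≤ L
  deviation_le : 10 ^ 6 * (K : ℝ) ^ 2 * L ≤ √δ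

namespace IsAdmissible

variable {n δ m g K : ℕ} {L : ℝ}

lemma heavy_eq_cast (h : IsAdmissible n δ m g K L) : (K : ℝ) = 400 * m := by
  rw [h.heavy_eq, h.block_eq]
  push_cast
  ring

lemma le_heavy (h : IsAdmissible n δ m g K L) : (4000 : ℝ) ≤ K := by
  have : (10 : ℝ) ≤ m := by exact_mod_cast h.ten_le
  linarith [h.heavy_eq_cast]

lemma sqrt_pos (h : IsAdmissible n δ m g K L) : 0 < √(δ : ℝ) := by
  have := h.le_heavy
  have := h.one_le
  exact lt_of_lt_of_le (by positivity) h.deviation_le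

lemma minDegree_pos (h : IsAdmissible n δ m g K L) : (0 : ℝ) < δ := Real.sqrt_pos.1 h.sqrt_pos

lemma sqrt_card_le (h : IsAdmissible n δ m g K L) : √(n : ℝ) ≤ K * √δ := by
  have hK := h.le_heavy
  have hδ := h.minDegree_pos
  have hn := h.card_le
  rw [Real.sqrt_le_left (by positivity), mul_pow, Real.sq_sqrt hδ.le]
  nlinarith [mul_pos (by linarith : (0 : ℝ) < K) hδ]

lemma deviation_le_div (h : IsAdmissible n δ m g K L) : K * L * √δ ≤ δ / K / 10 ^ 6 := by
  have hK : (0 : ℝ) < K := by linarith [h.le_heavy]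
  have hsq := Real.mul_self_sqrt h.minDegree_pos.le
  rw [div_div, le_div_iff₀ (by positivity)]
  nlinarith [mul_le_mul_of_nonneg_right h.deviation_le h.sqrt_pos.le]

lemma deviation_card_le_div (h : IsAdmissible n δ m g K L) : L * √n ≤ δ / K / 10 ^ 6 := by
  have hL : 0 ≤ L := by linarith [h.one_le]
  calc L * √n ≤ L * (K * √δ) := mul_le_mul_of_nonneg_left h.sqrt_card_le hL
    _ = K * L * √δ := by ring
    _ ≤ _ := h.deviation_le_div

lemma heavy_pow_le_div (h : IsAdmissible n δ m g K L) : (K : ℝ) ^ 3 ≤ δ / K / 10 ^ 6 := by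
  have hK : (0 : ℝ) < K := by linarith [h.le_heavy]
  have hsqrt : 10 ^ 6 * (K : ℝ) ^ 2 ≤ √δ :=
    (le_mul_of_one_le_right (by positivity) h.one_le).trans h.deviation_le
  have hsq := mul_le_mul hsqrt hsqrt (by positivity) h.sqrt_pos.le
  rw [Real.mul_self_sqrt h.minDegree_pos.le] at hsq
  rw [div_div, le_div_iff₀ (by positivity)]
  nlinarith [pow_pos hK 4]

lemma two_mul_deviation_le (h : IsAdmissible n δ m g K L) {d : ℕ} (hd : δ ≤ d) :
    2 * (K * L * √d) ≤ d := by
  have hK : 2 * (K : ℝ) ≤ 10 ^ 6 * K ^ 2 := by nlinarith [h.le_heavy]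
  have hsqrt : 2 * K * L ≤ √d := calc
    2 * K * L ≤ 10 ^ 6 * K ^ 2 * L := mul_le_mul_of_nonneg_right hK (by linarith [h.one_le])
    _ ≤ √δ := h.deviation_le
    _ ≤ √d := by gcongr
  nlinarith [Real.mul_self_sqrt (Nat.cast_nonneg (α := ℝ) d), Real.sqrt_nonneg (d : ℝ)]

lemma half_div_le_natDiv_add_one (h : IsAdmissible n δ m g K L) :
    (δ : ℝ) / K / 2 ≤ (δ / (2 * K) : ℕ) + 1 := by
  have hK : 0 < K := by exact_mod_cast (by linarith [h.le_heavy] : (0 : ℝ) < K)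
  have hlt : (δ : ℝ) < (δ / (2 * K) : ℕ) * (2 * K) + 2 * K := by
    exact_mod_cast Nat.lt_div_mul_add (a := δ) (b := 2 * K) (by omega)
  rw [div_div, div_le_iff₀ (by positivity)]
  linarith

lemma block_mul_le (h : IsAdmissible n δ m g K L) : g * (δ / (2 * K) + 2) ≤ δ := by
  have hK := h.le_heavy
  have hg : (K : ℝ) = 4 * g := by exact_mod_cast h.heavy_eq
  have hq : (δ : ℝ) / K * K = δ := div_mul_cancel₀ _ (by linarith)
  have hdiv : ((δ / (2 * K) : ℕ) : ℝ) ≤ δ / K / 2 := by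
    rw [div_div, mul_comm (K : ℝ)]
    exact_mod_cast Nat.cast_div_le (α := ℝ) (m := δ) (n := 2 * K)
  have hKq : 4 ≤ (δ : ℝ) / K := by
    linarith [h.heavy_pow_le_div, one_le_pow₀ (n := 3) (by linarith : (1 : ℝ) ≤ K)]
  have : (g : ℝ) * ((δ / (2 * K) : ℕ) + 2) ≤ δ := calc
    (g : ℝ) * ((δ / (2 * K) : ℕ) + 2) ≤ g * (4 * (δ / K)) := by gcongr; linarith
    _ = δ / K * (4 * g) := by ring
    _ = δ := by rw [← hg, hq]
  exact_mod_cast this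

lemma card_div_le (h : IsAdmissible n δ m g K L) : (n : ℝ) / (K * δ) ≤ 1 - 4 / m := by
  have hK := h.le_heavy
  have hδ := h.minDegree_pos
  have hm : (m : ℝ) ≠ 0 := by exact_mod_cast (by linarith [h.ten_le] : m ≠ 0)
  have heq : (1 - 4 / (m : ℝ)) * (K * δ) = K * δ - 1600 * δ := by
    rw [h.heavy_eq_cast]
    field_simp
    ring
  rw [div_le_iff₀ (by positivity), heq]
  linarith [h.card_le]

lemma card_mul_deviation_le (h : IsAdmissible n δ m g K L) :
    n * (2 * L / √δ) ≤ 2 * (δ / K / 10 ^ 6) := by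
  have hL : 0 ≤ L := by linarith [h.one_le]
  have hn : (n : ℝ) ≤ K * (√δ * √δ) := by
    rw [Real.mul_self_sqrt h.minDegree_pos.le]
    linarith [h.card_le, h.minDegree_pos]
  calc n * (2 * L / √δ) ≤ K * (√δ * √δ) * (2 * L / √δ) := by gcongr
    _ = 2 * (K * L * √δ) := by
      have := h.sqrt_pos.ne'
      field_simp
    _ ≤ 2 * (δ / K / 10 ^ 6) := by linarith [h.deviation_le_div]

lemma placement_fits (h : IsAdmissible n δ m g K L) {a c : ℝ} (hac : a ≤ c) :
    n * ((c - a) / (K * δ) + 2 * L / √δ) + 1 + L * √n + g * m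
      ≤ (1 - 4 / m) * (c - a + (δ / (2 * K) : ℕ) + 1) := by
  have hm : (10 : ℝ) ≤ m := by exact_mod_cast h.ten_le
  have hKm := h.heavy_eq_cast
  have hg : (g : ℝ) = 100 * m := by exact_mod_cast h.block_eq
  have hhalf : (1 : ℝ) / 2 ≤ 1 - 4 / m := by
    have : (4 : ℝ) / m ≤ 1 / 2 := by rw [div_le_iff₀ (by linarith)]; linarith
    linarith
  have hlin : n * ((c - a) / (K * δ)) ≤ (1 - 4 / m) * (c - a) := calc
    n * ((c - a) / (K * δ)) = n / (K * δ) * (c - a) := by ring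
    _ ≤ (1 - 4 / m) * (c - a) := mul_le_mul_of_nonneg_right h.card_div_le (by linarith)
  have hslack : δ / K / 4 ≤ (1 - 4 / m) * ((δ / (2 * K) : ℕ) + 1 : ℝ) := calc
    (δ : ℝ) / K / 4 = 1 / 2 * (δ / K / 2) := by ring
    _ ≤ (1 - 4 / m) * ((δ / (2 * K) : ℕ) + 1 : ℝ) :=
      mul_le_mul hhalf h.half_div_le_natDiv_add_one (by positivity) (by linarith)
  have hconst : 1 + (g : ℝ) * m ≤ δ / K / 10 ^ 6 := by
    refine le_trans ?_ h.heavy_pow_le_div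
    rw [hg, hKm]
    nlinarith [mul_self_nonneg (m : ℝ)]
  have := h.card_mul_deviation_le
  have := h.deviation_card_le_div
  have hq : (0 : ℝ) ≤ δ / K := by positivity
  linarith

lemma natDiv_lt_mul_add (h : IsAdmissible n δ m g K L) :
    (δ : ℝ) / K / 2 < m * ((δ / (2 * K) + 1) / m : ℕ) + m := by
  have hlt : ((δ / (2 * K) : ℕ) + 1 : ℝ) < m * ((δ / (2 * K) + 1) / m : ℕ) + m := by
    exact_mod_cast Nat.lt_mul_div_succ _ (by linarith [h.ten_le])
  linarith [h.half_div_le_natDiv_add_one]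

lemma conflicts_fit (h : IsAdmissible n δ m g K L) :
    9 * n / K ^ 2 + 1 + L * √n < (g * ((δ / (2 * K) + 1) / m) : ℕ) := by
  have hK := h.le_heavy
  have hKm := h.heavy_eq_cast
  have hcube : (K : ℝ) ≤ K ^ 3 := le_self_pow₀ (by linarith) (by norm_num)
  have hn : 9 * (n : ℝ) / K ^ 2 ≤ 9 * ((δ : ℝ) / K) := calc
    9 * (n : ℝ) / K ^ 2 ≤ 9 * (K * δ) / K ^ 2 := by
      gcongr
      linarith [h.card_le, h.minDegree_pos]
    _ = 9 * ((δ : ℝ) / K) := by field_simp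
  rw [h.block_eq]
  push_cast
  linarith [h.natDiv_lt_mul_add, h.heavy_pow_le_div, h.deviation_card_le_div]

lemma card_lt (h : IsAdmissible n δ m g K L) :
    n < (δ / (2 * K) + 1) / m * (δ / (2 * K) + 1) := by
  have hK := h.le_heavy
  have hδ := h.minDegree_pos
  have hm : (10 : ℝ) ≤ m := by exact_mod_cast h.ten_le
  have hrounds : 4 * (K : ℝ) ^ 2 ≤ ((δ / (2 * K) + 1) / m : ℕ) := by
    refine le_of_mul_le_mul_left (a := (m : ℝ)) ?_ (by linarith)
    have heq : m * (4 * (K : ℝ) ^ 2) = K ^ 3 / 100 := by rw [h.heavy_eq_cast]; ring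
    have hcube : (K : ℝ) ≤ K ^ 3 := le_self_pow₀ (by linarith) (by norm_num)
    linarith [h.natDiv_lt_mul_add, h.heavy_pow_le_div, h.heavy_eq_cast]
  have : (n : ℝ) < ((δ / (2 * K) + 1) / m : ℕ) * ((δ / (2 * K) : ℕ) + 1) := calc
    (n : ℝ) < 2 * (K * δ) := by linarith [h.card_le, mul_pos (by linarith : (0 : ℝ) < K) hδ]
    _ = 4 * (K : ℝ) ^ 2 * (δ / K / 2) := by field_simp; ring
    _ ≤ _ := by gcongr; exact h.half_div_le_natDiv_add_one
  exact_mod_cast this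

end IsAdmissible

end Parameters

section Construction

variable {V : Type*} [Fintype V]

/-- The edge weighting that is `K + 1` on the heavy edges, those whose labels under `X` add up to
at least the number of vertices, and `1` on all other edges. -/
def initialWeight (K : ℕ) (X : V → ℕ) : Sym2 V → ℕ :=
  Sym2.lift ⟨fun u v ↦ 1 + if Fintype.card V ≤ X u + X v then K else 0, fun u v ↦ by
    simp only [add_comm (X u)]⟩

lemma initialWeight_mk (K : ℕ) (X : V → ℕ) (u v : V) :
    initialWeight K X s(u, v) = 1 + if Fintype.card V ≤ X u + X v then K else 0 :=
  rfl

lemma one_le_initialWeight (K : ℕ) (X : V → ℕ) (e : Sym2 V) : 1 ≤ initialWeight K X e := by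
  induction e with
  | h u v => exact Nat.le_add_right 1 _

lemma initialWeight_le (K : ℕ) (X : V → ℕ) (e : Sym2 V) : initialWeight K X e ≤ K + 1 := by
  induction e with
  | h u v =>
    rw [initialWeight_mk]
    split_ifs <;> omega

variable (G : SimpleGraph V) [DecidableRel G.Adj]

lemma weightedDeg_initialWeight (K : ℕ) (X : V → ℕ) (v : V) :
    weightedDeg G (initialWeight K X) v
      = G.degree v + K * #{u ∈ G.neighborFinset v | Fintype.card V ≤ X u + X v} := by
  simp only [weightedDeg, initialWeight_mk, Finset.sum_add_distrib, ← Finset.sum_filter,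
    Finset.sum_const, smul_eq_mul, mul_one, G.card_neighborFinset_eq_degree, mul_comm K]

lemma weightedDeg_initialWeight_le (K : ℕ) (X : V → ℕ) (v : V) :
    weightedDeg G (initialWeight K X) v ≤ Fintype.card V * (K + 1) := by
  rw [mul_comm]
  exact (weightedDeg_le_mul_degree G fun u _ ↦ initialWeight_le K X s(u, v)).trans
    (Nat.mul_le_mul_left _ (G.degree_lt_card_verts v).le)

lemma weightedDeg_le_add_degree {f f' : Sym2 V → ℕ} (hf : ∀ e, f' e ≤ f e + 1) (v : V) :
    weightedDeg G f' v ≤ weightedDeg G f v + G.degree v := by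
  rw [← G.card_neighborFinset_eq_degree, Finset.card_eq_sum_ones, weightedDeg, weightedDeg,
    ← Finset.sum_add_distrib]
  exact Finset.sum_le_sum fun u _ ↦ hf _

variable [DecidableEq V] {S : Finset V}

lemma weightedDeg_le_add_mul_card {f f' : Sym2 V → ℕ} {K : ℕ} (hf : ∀ e ∉ S.sym2, f e ≤ f' e)
    (hfS : ∀ e ∈ S.sym2, f e ≤ f' e + K) (v : V) :
    weightedDeg G f v ≤ weightedDeg G f' v + K * #{u ∈ G.neighborFinset v | u ∈ S} := by
  rw [mul_comm, ← smul_eq_mul, ← Finset.sum_const, Finset.sum_filter, weightedDeg, weightedDeg,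
    ← Finset.sum_add_distrib]
  refine Finset.sum_le_sum fun u _ ↦ ?_
  split_ifs with hu
  · by_cases hv : v ∈ S
    · exact hfS _ (Finset.mk_mem_sym2_iff.2 ⟨hu, hv⟩)
    · exact (hf _ fun h ↦ hv (Finset.mk_mem_sym2_iff.1 h).2).trans (Nat.le_add_right _ _)
  · exact hf _ fun h ↦ hu (Finset.mk_mem_sym2_iff.1 h).1

variable {G} {X : V → ℕ} {K m g : ℕ} {L : ℝ}

namespace IsQuasirandom

lemma abs_weightedDeg_sub_le (hq : IsQuasirandom G K L X S) (v : V) :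
    |(weightedDeg G (initialWeight K X) v : ℝ) - expectedWeight G K v (X v)|
      ≤ K * L * √(G.degree v) := by
  rw [weightedDeg_initialWeight, expectedWeight]
  push_cast
  calc _ = |(K : ℝ) * (#{u ∈ G.neighborFinset v | Fintype.card V ≤ X u + X v}
            - G.degree v * X v / Fintype.card V)| := by congr 1; ring
    _ ≤ K * (L * √(G.degree v)) := by
      rw [abs_mul, Nat.abs_cast]
      exact mul_le_mul_of_nonneg_left (hq.abs_card_heavy_sub_le v) (Nat.cast_nonneg K)
    _ = K * L * √(G.degree v) := by ring

variable (hq : IsQuasirandom G K L X S)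
  (ha : IsAdmissible (Fintype.card V) G.minDegree m g K L)
include hq ha

lemma mul_card_reserve_mem_Icc (v : V) :
    (K * #{u ∈ G.neighborFinset v | u ∈ S} : ℝ)
      ∈ Set.Icc (G.degree v / 2 : ℝ) (2 * G.degree v) := by
  have hK := ha.le_heavy
  have hdev := ha.two_mul_deviation_le (G.minDegree_le_degree v)
  have hcard := mul_le_mul_of_nonneg_left (hq.abs_card_reserve_sub_le v) (Nat.cast_nonneg K)
  rw [← Nat.abs_cast K, ← abs_mul, Nat.abs_cast, mul_sub, mul_div_cancel₀ _ (by linarith),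
    abs_le] at hcard
  have : (0 : ℝ) ≤ G.degree v := Nat.cast_nonneg _
  constructor <;> linarith [hcard.1, hcard.2]

lemma le_card_reserve (v : V) :
    G.minDegree / (2 * K) ≤ #{u ∈ G.neighborFinset v | u ∈ S} := by
  have hδ : (G.minDegree : ℝ) ≤ G.degree v := by exact_mod_cast G.minDegree_le_degree v
  have hle : (G.minDegree : ℝ) ≤ 2 * K * #{u ∈ G.neighborFinset v | u ∈ S} := by
    linarith [(hq.mul_card_reserve_mem_Icc ha v).1]
  exact Nat.div_le_of_le_mul (by exact_mod_cast hle)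

lemma card_filter_weightedDeg_le {a c : ℕ} (hac : a ≤ c)
    (hc : c ≤ Fintype.card V * (K + 1)) :
    (#{v ∈ Sᶜ | a ≤ weightedDeg G (initialWeight K X) v ∧
        weightedDeg G (initialWeight K X) v ≤ c} : ℝ) + g * m
      ≤ (1 - 4 / m) * (c - a + (G.minDegree / (2 * K) : ℕ) + 1) := by
  have hsub : #{v ∈ Sᶜ | a ≤ weightedDeg G (initialWeight K X) v ∧
        weightedDeg G (initialWeight K X) v ≤ c}
      ≤ #{v | a - K * L * √(G.degree v) ≤ expectedWeight G K v (X v) ∧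
        expectedWeight G K v (X v) ≤ c + K * L * √(G.degree v)} := by
    refine Finset.card_le_card fun v hv ↦ ?_
    obtain ⟨-, hav, hvc⟩ := Finset.mem_filter.1 hv
    have hav : (a : ℝ) ≤ weightedDeg G (initialWeight K X) v := by exact_mod_cast hav
    have hvc : (weightedDeg G (initialWeight K X) v : ℝ) ≤ c := by exact_mod_cast hvc
    obtain ⟨hlo, hhi⟩ := abs_le.1 (hq.abs_weightedDeg_sub_le v)
    exact Finset.mem_filter_univ _ |>.2 ⟨by linarith, by linarith⟩
  have hfits := ha.placement_fits (a := a) (c := c) (by exact_mod_cast hac)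
  linarith [hq.card_window_le hac hc, (Nat.cast_le (α := ℝ)).2 hsub]

lemma exists_placement : ∃ t : V → ℕ,
    (∀ v ∈ Sᶜ, 4 ≤ t v / g % m ∧ weightedDeg G (initialWeight K X) v ≤ t v ∧
      t v ≤ weightedDeg G (initialWeight K X) v + G.minDegree / (2 * K)) ∧
    Set.InjOn t (Sᶜ : Finset V) := by
  have hm : 10 ≤ m := ha.ten_le
  have hg : 0 < g := by rw [ha.block_eq]; omega
  refine exists_injOn_of_card_le_count (P := fun z ↦ 4 ≤ z / g % m) fun u _ v _ huv ↦ ?_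
  obtain ⟨ℓ, hℓ⟩ := Nat.exists_eq_add_of_le huv
  have hcount := count_add_sub_le_count_le_div_mod hg (by omega : 0 < m) (by omega : 4 ≤ m)
    (weightedDeg G (initialWeight K X) u) (ℓ + G.minDegree / (2 * K) + 1)
  have hcard := hq.card_filter_weightedDeg_le ha huv (weightedDeg_initialWeight_le G K X v)
  rw [← add_assoc, ← add_assoc, ← hℓ] at hcount
  have hℓ' : (weightedDeg G (initialWeight K X) v : ℝ)
      = weightedDeg G (initialWeight K X) u + ℓ := by exact_mod_cast hℓ
  rw [hℓ', add_sub_cancel_left] at hcard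
  push_cast at hcount
  rw [← Nat.cast_le (α := ℝ)]
  push_cast
  linarith

section Reserve

variable {f : Sym2 V → ℕ}
  (hle : ∀ v, weightedDeg G f v ≤ weightedDeg G (initialWeight K X) v + G.degree v)
  (hge : ∀ v, weightedDeg G (initialWeight K X) v
    ≤ weightedDeg G f v + K * #{u ∈ G.neighborFinset v | u ∈ S})
include hle hge

lemma card_conflicts_lt (x : ℕ) :
    #{u : S | weightedDeg G f u ≤ x + g * (G.minDegree / (2 * K) + 2) ∧
        x ≤ weightedDeg G f u + 4 * g * #{v ∈ G.neighborFinset (u : V) | v ∈ S}}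
      < g * ((G.minDegree / (2 * K) + 1) / m) := by
  have hsub : #{u : S | weightedDeg G f u ≤ x + g * (G.minDegree / (2 * K) + 2) ∧
        x ≤ weightedDeg G f u + 4 * g * #{v ∈ G.neighborFinset (u : V) | v ∈ S}}
      ≤ #{v ∈ S | x - 4 * G.degree v ≤ expectedWeight G K v (X v) ∧
        expectedWeight G K v (X v) ≤ x + 5 * G.degree v} := by
    refine Finset.card_le_card_of_injOn Subtype.val (fun u hu ↦ ?_) Subtype.val_injective.injOn
    obtain ⟨hupper, hlower⟩ := Finset.mem_filter_univ _ |>.1 hu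
    have hupper : (weightedDeg G f u : ℝ) ≤ x + G.degree (u : V) := by
      exact_mod_cast hupper.trans (Nat.add_le_add_left
        (ha.block_mul_le.trans (G.minDegree_le_degree u)) x)
    have hlower : (x : ℝ) ≤ weightedDeg G f u
        + K * #{v ∈ G.neighborFinset (u : V) | v ∈ S} := by
      rw [← ha.heavy_eq] at hlower
      exact_mod_cast hlower
    have hle : (weightedDeg G f u : ℝ)
        ≤ weightedDeg G (initialWeight K X) u + G.degree (u : V) := by exact_mod_cast hle u
    have hge : (weightedDeg G (initialWeight K X) u : ℝ)
        ≤ weightedDeg G f u + K * #{v ∈ G.neighborFinset (u : V) | v ∈ S} := by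
      exact_mod_cast hge u
    have hreserve := (hq.mul_card_reserve_mem_Icc ha u).2
    have hdev := ha.two_mul_deviation_le (G.minDegree_le_degree (u : V))
    obtain ⟨hlo, hhi⟩ := abs_le.1 (hq.abs_weightedDeg_sub_le (u : V))
    exact Finset.mem_filter.2 ⟨u.2, by linarith, by linarith⟩
  have := ((Nat.cast_le (α := ℝ)).2 hsub).trans (hq.card_reserve_window_le x)
  exact_mod_cast this.trans_lt ha.conflicts_fit

lemma exists_reserve_weighting : ∃ f' : Sym2 S → ℕ, (∀ e, f' e < K) ∧
    (Function.Injective fun v : S ↦ weightedDeg G f v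
      + weightedDeg (G.comap (Function.Embedding.subtype (· ∈ S))) f' v) ∧
    ∀ v : S, (weightedDeg G f v
      + weightedDeg (G.comap (Function.Embedding.subtype (· ∈ S))) f' v) / g % m < 4 := by
  rw [ha.heavy_eq]
  refine exists_injective_add_weightedDeg _ (fun v : S ↦ weightedDeg G f v)
    (h := G.minDegree / (2 * K)) (R := (G.minDegree / (2 * K) + 1) / m)
    (by linarith [ha.ten_le]) (Nat.mul_div_le _ _) (fun v ↦ ?_) ?_ fun x ↦ ?_
  · rw [degree_comap_subtype]
    exact hq.le_card_reserve ha v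
  · rw [Fintype.card_coe]
    exact S.card_le_univ.trans_lt ha.card_lt
  · simp only [degree_comap_subtype]
    exact hq.card_conflicts_lt ha hle hge x

end Reserve

theorem exists_isIrregularAssignment : ∃ f, IsIrregularAssignment G (K + 2) f := by
  obtain ⟨t, ht, htinj⟩ := hq.exists_placement ha
  simp only [Finset.mem_compl] at ht
  obtain ⟨f, hf, hfS, hft⟩ := exists_weightedDeg_eq_of_notMem G (initialWeight K X)
    (fun v hv ↦ (ht v hv).2.1)
    fun v hv ↦ (ht v hv).2.2.trans (Nat.add_le_add_left (hq.le_card_reserve ha v) _)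
  have hbounds (e : Sym2 V) : 1 ≤ f e ∧ f e ≤ initialWeight K X e + 1 ∧
      (e ∈ S.sym2 → initialWeight K X e ≤ f e + K) := by
    have := one_le_initialWeight K X e
    have := initialWeight_le K X e
    by_cases he : e ∈ S.sym2
    · have := hfS e he
      exact ⟨by omega, by omega, fun _ ↦ by omega⟩
    · have := hf e he
      exact ⟨by omega, by omega, fun h ↦ absurd h he⟩
  obtain ⟨f', hf', hinj, hres⟩ := hq.exists_reserve_weighting ha (f := f)
    (weightedDeg_le_add_degree G fun e ↦ (hbounds e).2.1)
    (weightedDeg_le_add_mul_card G (fun e he ↦ (hf e he).1) fun e ↦ (hbounds e).2.2)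
  refine ⟨_, isIrregularAssignment_add_extend G (P := fun z ↦ 4 ≤ z / g % m)
    (fun e ↦ (hbounds e).1)
    (fun e ↦ (hbounds e).2.1.trans (Nat.succ_le_succ (initialWeight_le K X e))) hfS
    (fun e ↦ (hf' e).trans (by omega)) (fun u hu v hv huv ↦ ?_) (fun v hv ↦ ?_) hinj
    fun v ↦ not_le.2 (hres v)⟩
  · rw [hft u hu, hft v hv] at huv
    exact htinj (by simpa using hu) (by simpa using hv) huv
  · rw [hft v hv]
    exact (ht v hv).1

end IsQuasirandom

end Construction

section IrregularityStrength

variable {V : Type*} [Fintype V] (G : SimpleGraph V) [DecidableRel G.Adj]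

lemma weightedDeg_two_pow (e : Sym2 V ↪ ℕ) (v : V) :
    weightedDeg G (fun z ↦ 2 ^ e z) v
      = ∑ i ∈ (G.neighborFinset v).image fun u ↦ e s(u, v), 2 ^ i :=
  (Finset.sum_image fun _ _ _ _ hxy ↦ Sym2.congr_left.1 (e.injective hxy)).symm

lemma injective_weightedDeg_two_pow (hdeg : ∀ v, 2 ≤ G.degree v) (e : Sym2 V ↪ ℕ) :
    Function.Injective (weightedDeg G fun z ↦ 2 ^ e z) := by
  classical
  intro u v huv
  by_contra hne
  rw [weightedDeg_two_pow, weightedDeg_two_pow] at huv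
  have hedges := Finset.geomSum_injective le_rfl huv
  have hsub : G.neighborFinset u ⊆ {v} := fun x hx ↦ by
    have hmem := Finset.mem_image_of_mem (fun y ↦ e s(y, u)) hx
    rw [hedges] at hmem
    obtain ⟨y, -, hy⟩ := Finset.mem_image.1 hmem
    obtain ⟨-, hvu⟩ | ⟨-, hvx⟩ := Sym2.eq_iff.1 (e.injective hy)
    · exact absurd hvu.symm hne
    · exact Finset.mem_singleton.2 hvx.symm
  have := Finset.card_le_card hsub
  rw [G.card_neighborFinset_eq_degree, Finset.card_singleton] at this
  linarith [hdeg u]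

lemma exists_isIrregularAssignment_two_pow (hdeg : ∀ v, 2 ≤ G.degree v) :
    ∃ f, IsIrregularAssignment G (2 ^ Fintype.card (Sym2 V)) f := by
  let e := Fintype.equivFin (Sym2 V)
  refine ⟨_, fun z _ ↦ ?_,
    injective_weightedDeg_two_pow G hdeg (e.toEmbedding.trans Fin.valEmbedding)⟩
  exact Finset.mem_Icc.2 ⟨Nat.one_le_two_pow, Nat.pow_le_pow_right two_pos (e z).2.le⟩

variable {G}

lemma irregularityStrength_le {k : ℕ} {f : Sym2 V → ℕ} (hk : 1 ≤ k)
    (hf : IsIrregularAssignment G k f) : irregularityStrength G ≤ k :=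
  iInf_le_of_le k (iInf_le_of_le hk (iInf_le _ ⟨f, hf⟩))

lemma exists_natCast_eq_irregularityStrength_le {k : ℕ} {f : Sym2 V → ℕ} {c : ℝ} (hk : 1 ≤ k)
    (hf : IsIrregularAssignment G k f) (hkc : (k : ℝ) ≤ c) :
    ∃ s : ℕ, irregularityStrength G = (s : ℕ∞) ∧ (s : ℝ) ≤ c := by
  obtain ⟨s, hs, hsk⟩ := ENat.le_natCast_iff.1 (irregularityStrength_le hk hf)
  exact ⟨s, hs, hkc.trans' (by exact_mod_cast hsk)⟩

end IrregularityStrength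

section DenseGraphs

open Filter

lemma eventually_le_rpow_and_mul_exp_lt {γ : ℝ} (hγ : 0 < γ) (a c : ℝ) (k : ℕ) :
    ∀ᶠ t : ℝ in atTop, a ≤ t ^ γ ∧ c * t ^ k * Real.exp (-2 * (t ^ γ) ^ 2) < 1 := by
  have hlim : Tendsto (fun t : ℝ ↦ c * ((t ^ (2 * γ)) ^ (k / (2 * γ)) *
      Real.exp (-2 * t ^ (2 * γ)))) atTop (nhds (c * 0)) :=
    ((tendsto_rpow_mul_exp_neg_mul_atTop_nhds_zero (k / (2 * γ)) 2 two_pos).comp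
      (tendsto_rpow_atTop (by positivity : 0 < 2 * γ))).const_mul c
  rw [mul_zero] at hlim
  filter_upwards [(tendsto_rpow_atTop hγ).eventually_ge_atTop a, hlim.eventually_lt_const one_pos,
    eventually_ge_atTop 0] with t hat ht ht0
  have hpow : (t ^ (2 * γ)) ^ (k / (2 * γ)) = t ^ k := by
    rw [← Real.rpow_mul ht0, mul_div_cancel₀ _ (by positivity), Real.rpow_natCast]
  have hsq : t ^ (2 * γ) = (t ^ γ) ^ 2 := by
    rw [mul_comm, Real.rpow_mul ht0, Real.rpow_two]
  rw [hpow, hsq, ← mul_assoc] at ht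
  exact ⟨hat, ht⟩

variable {n δ : ℕ} {ε : ℝ}

lemma div_le_rpow_of_le_rpow_one_add (hδ : 0 < δ) (hn : (n : ℝ) ≤ (δ : ℝ) ^ (1 + ε)) :
    (n : ℝ) / δ ≤ (δ : ℝ) ^ ε := by
  have hδ : (0 : ℝ) < δ := by exact_mod_cast hδ
  rw [div_le_iff₀ hδ, mul_comm]
  simpa only [Real.rpow_add hδ, Real.rpow_one] using hn

lemma le_sq_of_le_rpow_one_add (hε : ε ≤ 1) (hδ : 1 ≤ δ)
    (hn : (n : ℝ) ≤ (δ : ℝ) ^ (1 + ε)) : (n : ℝ) ≤ (δ : ℝ) ^ 2 := by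
  rw [← Real.rpow_two]
  exact hn.trans (Real.rpow_le_rpow_of_exponent_le (by exact_mod_cast hδ) (by linarith))

lemma exists_isAdmissible (hε : 0 ≤ ε) (hδ : 1 ≤ δ) (hn : (n : ℝ) ≤ (δ : ℝ) ^ (1 + ε))
    (hlarge : 25 * 10 ^ 12 ≤ (δ : ℝ) ^ (1 / 4 - ε)) :
    ∃ m g K : ℕ, IsAdmissible n δ m g K ((δ : ℝ) ^ (1 / 4 - ε)) ∧ (K : ℝ) ≤ n / δ + 4400 := by
  have hδ1 : (1 : ℝ) ≤ δ := by exact_mod_cast hδ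
  have hδ0 : (0 : ℝ) < δ := by linarith
  have hlo := Nat.le_ceil ((n : ℝ) / δ / 400)
  have hhi := Nat.ceil_lt_add_one (by positivity : 0 ≤ (n : ℝ) / δ / 400)
  set q := ⌈(n : ℝ) / δ / 400⌉₊
  have hK : ((4 * (100 * (q + 10)) : ℕ) : ℝ) = 400 * q + 4000 := by push_cast; ring
  refine ⟨q + 10, 100 * (q + 10), 4 * (100 * (q + 10)),
    ⟨by omega, rfl, rfl, ?_, by linarith, ?_⟩, by rw [hK]; linarith⟩
  · rw [hK, ← div_le_iff₀ hδ0, add_div, mul_div_cancel_right₀ _ hδ0.ne']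
    linarith
  · have hKε : (400 * q + 4000 : ℝ) ≤ 5000 * (δ : ℝ) ^ ε := by
      linarith [div_le_rpow_of_le_rpow_one_add hδ hn, Real.one_le_rpow hδ1 hε]
    have hsqrt : √(δ : ℝ) = ((δ : ℝ) ^ ε) ^ 2 * (δ : ℝ) ^ (1 / 4 - ε) * (δ : ℝ) ^ (1 / 4 - ε) := by
      rw [Real.sqrt_eq_rpow, ← Real.rpow_mul_natCast hδ0.le, ← Real.rpow_add hδ0,
        ← Real.rpow_add hδ0]
      congr 1
      push_cast
      ring
    rw [hK, hsqrt]
    calc 10 ^ 6 * (400 * q + 4000 : ℝ) ^ 2 * (δ : ℝ) ^ (1 / 4 - ε)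
        ≤ 10 ^ 6 * (5000 * (δ : ℝ) ^ ε) ^ 2 * (δ : ℝ) ^ (1 / 4 - ε) := by gcongr
      _ = ((δ : ℝ) ^ ε) ^ 2 * (δ : ℝ) ^ (1 / 4 - ε) * (25 * 10 ^ 12) := by ring
      _ ≤ _ := by gcongr

lemma union_bound_le {K : ℕ} (hε : ε ≤ 1) (hδ : 1 ≤ δ) (hn : (n : ℝ) ≤ (δ : ℝ) ^ (1 + ε))
    (hK : (K : ℝ) ≤ n / δ + 4400) : 6 * (n * (K + 6) : ℝ) ^ 2 ≤ 10 ^ 9 * (δ : ℝ) ^ 6 := by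
  have hδ1 : (1 : ℝ) ≤ δ := by exact_mod_cast hδ
  have hnsq := le_sq_of_le_rpow_one_add hε hδ hn
  have hdiv : (n : ℝ) / δ ≤ δ := by
    rw [div_le_iff₀ (by linarith), ← sq]
    exact hnsq
  calc 6 * (n * (K + 6) : ℝ) ^ 2 ≤ 6 * ((δ : ℝ) ^ 2 * (5000 * δ)) ^ 2 := by
        gcongr
        linarith
    _ = 15 * 10 ^ 7 * (δ : ℝ) ^ 6 := by ring
    _ ≤ 10 ^ 9 * (δ : ℝ) ^ 6 := by gcongr; norm_num

lemma exists_forall_isIrregularAssignment (hε : 0 ≤ ε) (hε' : ε < 1 / 4) :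
    ∃ D : ℝ, ∀ {V : Type*} [Fintype V] (G : SimpleGraph V) [DecidableRel G.Adj],
      1 ≤ G.minDegree → D ≤ G.minDegree →
      (Fintype.card V : ℝ) ≤ (G.minDegree : ℝ) ^ (1 + ε) →
      ∃ k : ℕ, 1 ≤ k ∧ (k : ℝ) ≤ Fintype.card V / G.minDegree + 4402 ∧
        ∃ f, IsIrregularAssignment G k f := by
  obtain ⟨D, hD⟩ := eventually_atTop.1
    (eventually_le_rpow_and_mul_exp_lt (sub_pos.2 hε') (25 * 10 ^ 12) (10 ^ 9) 6)
  refine ⟨D, fun {V} _ G _ hδ hDδ hn ↦ ?_⟩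
  classical
  obtain ⟨hlarge, hexp⟩ := hD _ hDδ
  obtain ⟨m, g, K, hadm, hK⟩ := exists_isAdmissible hε hδ hn hlarge
  have hKpos : 0 < K := by exact_mod_cast (by linarith [hadm.le_heavy] : (0 : ℝ) < K)
  obtain ⟨X, S, hquasi⟩ := exists_isQuasirandom hKpos (by linarith [hadm.one_le]) hδ <|
    (mul_le_mul_of_nonneg_right (union_bound_le (by linarith) hδ hn hK)
      (Real.exp_pos _).le).trans_lt hexp
  exact ⟨K + 2, by omega, by push_cast; linarith, hquasi.exists_isIrregularAssignment hadm⟩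

lemma two_le_minDegree {V : Type*} [Fintype V] {G : SimpleGraph V} [DecidableRel G.Adj]
    (hδ : 1 ≤ G.minDegree) (hn : (Fintype.card V : ℝ) ≤ (G.minDegree : ℝ) ^ (1 + ε)) :
    2 ≤ G.minDegree := by
  have : Nonempty V := by
    by_contra hempty
    rw [not_nonempty_iff] at hempty
    simp at hδ
  refine hδ.lt_of_ne fun hone ↦ ?_
  rw [← hone, Nat.cast_one, Real.one_rpow] at hn
  exact absurd (hone ▸ G.minDegree_lt_card) (by exact_mod_cast not_lt.2 hn)

end DenseGraphs

/-- Faudree–Lehel conjecture for dense graphs: for every `ε ∈ (0, 0.25)` there is an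
absolute constant `C` such that every graph `G` on `n` vertices with minimum degree
`δ ≥ 1` satisfying `δ^(1+ε) ≥ n` satisfies `s(G) ≤ n/δ + C`. -/
theorem faudree_lehel_dense :
    ∀ ε : ℝ, ε ∈ Set.Ioo (0 : ℝ) 0.25 →
    ∃ C : ℝ, ∀ (V : Type) [Fintype V] (G : SimpleGraph V) [DecidableRel G.Adj]
      (n δ : ℕ), Fintype.card V = n → G.minDegree = δ → 1 ≤ δ →
      (n : ℝ) ≤ (δ : ℝ) ^ (1 + ε) →
      ∃ s : ℕ, irregularityStrength G = (s : ℕ∞) ∧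
        (s : ℝ) ≤ (n : ℝ) / (δ : ℝ) + C := by
  rintro ε ⟨hε, hε'⟩
  norm_num at hε'
  obtain ⟨D, hD⟩ := exists_forall_isIrregularAssignment hε.le hε'
  refine ⟨max 4402 (2 ^ (⌊D ^ 2⌋₊ + 1).choose 2), ?_⟩
  rintro V _ G _ _ _ rfl rfl hδ hn
  obtain hDδ | hDδ := le_or_gt D G.minDegree
  · obtain ⟨k, hk, hkC, f, hf⟩ := hD G hδ hDδ hn
    exact exists_natCast_eq_irregularityStrength_le hk hf
      (hkC.trans (by gcongr; exact le_max_left _ _))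
  · have hcard : Fintype.card V ≤ ⌊D ^ 2⌋₊ :=
      Nat.le_floor ((le_sq_of_le_rpow_one_add (by linarith) hδ hn).trans (by gcongr))
    obtain ⟨f, hf⟩ := exists_isIrregularAssignment_two_pow G fun v ↦
      (two_le_minDegree hδ hn).trans (G.minDegree_le_degree v)
    refine exists_natCast_eq_irregularityStrength_le Nat.one_le_two_pow hf ?_
    rw [Sym2.card, Nat.cast_pow, Nat.cast_two]
    refine le_add_of_nonneg_of_le (by positivity) (le_max_of_le_right ?_)
    exact pow_le_pow_right₀ one_le_two (Nat.choose_le_choose 2 (by omega))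

end FL
end
end

section
/- Let p be a positive integer and let I_i = [a_i, b_i) ⊆ ℤ, 1 ≤ i ≤ p, be integer intervals (a_i, b_i ∈ ℤ, a_i ≤ b_i) with a_1 ≤ a_2 ≤ … ≤ a_p. Then there exist pairwise disjoint integer intervals I_i' = [a_i', b_i') with b_i' − a_i' = b_i − a_i for each i, with a_1' = a_1 and a_1' ≤ a_2' ≤ … ≤ a_p', such that max_{1 ≤ i ≤ p} |a_i' − a_i| ≤ max(0, max_{1 ≤ l₁ ≤ l₂ ≤ p−1} Σ_{i=l₁}^{l₂} ((b_i − a_i) − (a_{i+1} − a_i))), where the inner maximum over an empty index range is taken as 0. -/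
/-!
Process the intervals from left to right, starting each one at its original left endpoint or, if
that is still occupied, where the previous translate ends. Whenever an interval is moved, follow
the chain of touching translates back to an interval `l` that did not move: the shift is
then exactly the sum of the overlaps `(b i - a i) - (a (i + 1) - a i)` along that chain.
-/

section GreedyPlacement

variable {G : Type*} [AddCommGroup G] [LinearOrder G]

/-- Left endpoints of the greedy translates of the intervals `[a i, b i)`, `i ≥ 1`: each starts at
`a i` or at the right endpoint of the previous translate, whichever is larger. Indexing starts at
`1`, as in the theorem; the value at `0` is a placeholder on which no other value depends. -/
def greedyStart (a b : ℕ → G) : ℕ → G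
  | 0 => a 0
  | 1 => a 1
  | n + 2 => max (a (n + 2)) (greedyStart a b (n + 1) + (b (n + 1) - a (n + 1)))

variable (a b : ℕ → G)

theorem greedyStart_one : greedyStart a b 1 = a 1 := by
  rw [greedyStart]

theorem greedyStart_succ {n : ℕ} (hn : 1 ≤ n) :
    greedyStart a b (n + 1) = max (a (n + 1)) (greedyStart a b n + (b n - a n)) := by
  obtain ⟨m, rfl⟩ := Nat.exists_eq_add_of_le' hn
  rw [greedyStart]

theorem le_greedyStart : ∀ n, a n ≤ greedyStart a b n
  | 0 => by rw [greedyStart]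
  | 1 => by rw [greedyStart]
  | n + 2 => by rw [greedyStart]; exact le_max_left _ _

theorem greedyStart_add_length_le_succ {n : ℕ} (hn : 1 ≤ n) :
    greedyStart a b n + (b n - a n) ≤ greedyStart a b (n + 1) :=
  greedyStart_succ a b hn ▸ le_max_right _ _

theorem exists_greedyStart_sub_eq_sum {n : ℕ} (hn : 1 ≤ n) :
    ∃ l, 1 ≤ l ∧ l ≤ n ∧
      greedyStart a b n - a n = ∑ i ∈ Finset.Ico l n, ((b i - a i) - (a (i + 1) - a i)) := by
  induction n, hn using Nat.le_induction with
  | base => exact ⟨1, le_rfl, le_rfl, by simp [greedyStart_one]⟩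
  | succ n hn ih =>
    rw [greedyStart_succ a b hn]
    rcases max_choice (a (n + 1)) (greedyStart a b n + (b n - a n)) with unmoved | pushed
    · exact ⟨n + 1, n.succ_pos, le_rfl, by simp [unmoved]⟩
    · obtain ⟨l, hl, hln, hsum⟩ := ih
      refine ⟨l, hl, hln.trans n.le_succ, ?_⟩
      rw [pushed, Finset.sum_Ico_succ_top hln, ← hsum]
      abel

variable {a b} [IsOrderedAddMonoid G] {p : ℕ}

theorem monotoneOn_greedyStart (hab : ∀ i, 1 ≤ i → i ≤ p → a i ≤ b i) :
    MonotoneOn (greedyStart a b) (Set.Icc 1 p) :=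
  monotoneOn_of_le_add_one Set.ordConnected_Icc fun n _ hn _ =>
    (le_add_of_nonneg_right (sub_nonneg.2 (hab n hn.1 hn.2))).trans
      (greedyStart_add_length_le_succ a b hn.1)

theorem greedyStart_add_length_le_of_lt (hab : ∀ i, 1 ≤ i → i ≤ p → a i ≤ b i) {i j : ℕ}
    (hi : 1 ≤ i) (hij : i < j) (hj : j ≤ p) :
    greedyStart a b i + (b i - a i) ≤ greedyStart a b j :=
  (greedyStart_add_length_le_succ a b hi).trans <|
    monotoneOn_greedyStart hab ⟨i.succ_pos, hij.trans_le hj⟩ ⟨hi.trans hij.le, hj⟩ hij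

theorem abs_greedyStart_sub_le {M : G} (hM : 0 ≤ M)
    (hsum : ∀ l₁ l₂, 1 ≤ l₁ → l₁ ≤ l₂ → l₂ ≤ p - 1 →
      ∑ i ∈ Finset.Icc l₁ l₂, ((b i - a i) - (a (i + 1) - a i)) ≤ M)
    {n : ℕ} (hn : 1 ≤ n) (hnp : n ≤ p) : |greedyStart a b n - a n| ≤ M := by
  rw [abs_of_nonneg (sub_nonneg.2 (le_greedyStart a b n))]
  obtain ⟨l, hl, hln, hshift⟩ := exists_greedyStart_sub_eq_sum a b hn
  rw [hshift]
  rcases hln.eq_or_lt with rfl | hlt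
  · simpa using hM
  · rw [← Finset.Icc_sub_one_right_eq_Ico_of_not_isMin (not_isMin_of_lt hlt)]
    exact hsum l (n - 1) hl (Nat.le_sub_one_of_lt hlt) (Nat.sub_le_sub_right hnp 1)

theorem interval_shift_general (p : ℕ) (a b : ℕ → G)
    (hab : ∀ i, 1 ≤ i → i ≤ p → a i ≤ b i) :
    ∃ a' b' : ℕ → G,
      (∀ i, 1 ≤ i → i ≤ p → b' i - a' i = b i - a i) ∧
      a' 1 = a 1 ∧
      (∀ i j, 1 ≤ i → i ≤ j → j ≤ p → a' i ≤ a' j) ∧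
      (∀ i j, 1 ≤ i → i < j → j ≤ p →
        Disjoint (Set.Ico (a' i) (b' i)) (Set.Ico (a' j) (b' j))) ∧
      (∀ M : G, 0 ≤ M →
        (∀ l₁ l₂, 1 ≤ l₁ → l₁ ≤ l₂ → l₂ ≤ p - 1 →
          ∑ i ∈ Finset.Icc l₁ l₂, ((b i - a i) - (a (i + 1) - a i)) ≤ M) →
        ∀ i, 1 ≤ i → i ≤ p → |a' i - a i| ≤ M) := by
  refine ⟨greedyStart a b, fun i => greedyStart a b i + (b i - a i),
    fun i _ _ => add_sub_cancel_left _ _, greedyStart_one a b, ?monotone, ?disjoint, ?bound⟩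
  case monotone =>
    exact fun i j hi hij hj =>
      monotoneOn_greedyStart hab ⟨hi, hij.trans hj⟩ ⟨hi.trans hij, hj⟩ hij
  case disjoint =>
    exact fun i j hi hij hj => Set.Ico_disjoint_Ico.2 <|
      (min_le_left _ _).trans <|
        (greedyStart_add_length_le_of_lt hab hi hij hj).trans (le_max_right _ _)
  case bound =>
    exact fun M hM hsum i hi hip => abs_greedyStart_sub_le hM hsum hi hip

end GreedyPlacement

/-- Interval-shifting lemma: given `p` integer intervals `[a_i, b_i)`, `1 ≤ i ≤ p`, with
`a_1 ≤ a_2 ≤ … ≤ a_p`, they may be translated to pairwise disjoint intervals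
`[a_i', b_i')` of the same lengths, with `a_1' = a_1` and `a_1' ≤ a_2' ≤ … ≤ a_p'`,
so that every shift `|a_i' - a_i|` is at most
`max(0, max_{1 ≤ l₁ ≤ l₂ ≤ p-1} Σ_{i=l₁}^{l₂} ((b_i - a_i) - (a_{i+1} - a_i)))`;
the latter is expressed by quantifying over all upper bounds `M` of these quantities. -/
theorem interval_shift (p : ℕ) (hp : 1 ≤ p) (a b : ℕ → ℤ)
    (hab : ∀ i, 1 ≤ i → i ≤ p → a i ≤ b i)
    (hmono : ∀ i j, 1 ≤ i → i ≤ j → j ≤ p → a i ≤ a j) :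
    ∃ a' b' : ℕ → ℤ,
      (∀ i, 1 ≤ i → i ≤ p → b' i - a' i = b i - a i) ∧
      a' 1 = a 1 ∧
      (∀ i j, 1 ≤ i → i ≤ j → j ≤ p → a' i ≤ a' j) ∧
      (∀ i j, 1 ≤ i → i < j → j ≤ p →
        Disjoint (Set.Ico (a' i) (b' i)) (Set.Ico (a' j) (b' j))) ∧
      (∀ M : ℤ, 0 ≤ M →
        (∀ l₁ l₂, 1 ≤ l₁ → l₁ ≤ l₂ → l₂ ≤ p - 1 →
          ∑ i ∈ Finset.Icc l₁ l₂, ((b i - a i) - (a (i + 1) - a i)) ≤ M) →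
        ∀ i, 1 ≤ i → i ≤ p → |a' i - a i| ≤ M) :=
  interval_shift_general p a b hab
end

section
/- Let k ≥ 2 be an integer, let H be a finite simple graph in which every vertex has degree at least k + 6, let w₀ : E(H) → ℤ be any initial edge weighting, and let a : V(H) → ℤ be any function. Then there exists an edge weighting w : E(H) → ℤ with |w(e) − w₀(e)| ≤ 2 for every edge e, such that for every vertex v the weighted degree Σ_{e incident to v} w(e) is congruent to a(v) or to a(v)+1 modulo k. -/
/-!
Process the vertices one by one. A processed vertex whose weighted degree lies in one of its two
admissible residue classes can always absorb a change of `+1` or of `-1`, the sign depending on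
which of the two classes it is in. So when `v` is processed, each edge `uv` may be left alone or
changed by a sign dictated by `u`, without harming `u`. The resulting changes of the weighted degree
of `v` fill an interval of `deg v + 1 ≥ k - 1` consecutive integers, and `k - 1` consecutive
integers always meet two consecutive residue classes modulo `k`. Each edge is changed at most once
per endpoint.
-/

open Finset

/-- `n` lies in one of the two consecutive residue classes of `a` and `a + 1` modulo `k`. -/
def ConsecutiveModEq (k : ℕ) (a n : ℤ) : Prop :=
  n ≡ a [ZMOD k] ∨ n ≡ a + 1 [ZMOD k]

/-- The sign by which a number in the residue class of `a` or `a + 1` modulo `k` moves to the other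
of these two classes. Outside both classes the value `-1` has no meaning. -/
def toggleSign (k : ℕ) (a n : ℤ) : ℤˣ :=
  if n ≡ a [ZMOD k] then 1 else -1

namespace ConsecutiveModEq

variable {k : ℕ} {a n : ℤ}

theorem add_toggleSign (h : ConsecutiveModEq k a n) :
    ConsecutiveModEq k a (n + toggleSign k a n) := by
  by_cases hn : n ≡ a [ZMOD k]
  · right
    simpa [toggleSign, hn] using hn.add_right 1
  · left
    simpa [toggleSign, hn] using (h.resolve_left hn).add_right (-1)

theorem add_left (c : ℤ) (h : ConsecutiveModEq k a n) : ConsecutiveModEq k (c + a) (c + n) :=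
  h.imp (·.add_left c) fun h ↦ by simpa only [add_assoc] using h.add_left c

theorem exists_mem_Icc {m : ℕ} (hk : k ≠ 0) (hm : k ≤ m + 2) (a lo : ℤ) :
    ∃ x ∈ Set.Icc lo (lo + m), ConsecutiveModEq k a x := by
  set r := (a - lo) % k
  have hr_nonneg : 0 ≤ r := Int.emod_nonneg _ (by exact_mod_cast hk)
  have hr_lt : r < k := Int.emod_lt_of_pos _ (by omega)
  have hlo : lo + r ≡ a [ZMOD k] := by
    simpa using (Int.mod_modEq (a - lo) k).add_left lo
  by_cases hrm : r ≤ m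
  · exact ⟨lo + r, ⟨by omega, by omega⟩, .inl hlo⟩
  · have hrk : lo + r + 1 = lo + k := by omega
    refine ⟨lo, ⟨le_rfl, by omega⟩, .inr ?_⟩
    calc
      lo ≡ lo + k [ZMOD k] := by simp [Int.ModEq]
      _ ≡ a + 1 [ZMOD k] := hrk ▸ hlo.add_right 1

end ConsecutiveModEq

section SignedSubsetSums

variable {ι : Type*} (σ : ι → ℤˣ) (N : Finset ι)

theorem exists_subset_sum_units_eq {x : ℤ} (hlo : -(#{i ∈ N | σ i = -1} : ℤ) ≤ x)
    (hhi : x ≤ #{i ∈ N | σ i = 1}) : ∃ T ⊆ N, ∑ i ∈ T, (σ i : ℤ) = x := by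
  have of_constant_sign (ε : ℤˣ) (h : x.natAbs ≤ #{i ∈ N | σ i = ε}) :
      ∃ T ⊆ N, ∑ i ∈ T, (σ i : ℤ) = x.natAbs * ε := by
    obtain ⟨T, hT, hcard⟩ := exists_subset_card_eq h
    refine ⟨T, hT.trans (filter_subset _ _), ?_⟩
    rw [← hcard, ← nsmul_eq_mul]
    exact sum_eq_card_nsmul fun i hi ↦ by rw [(mem_filter.mp (hT hi)).2]
  rcases le_total 0 x with hx | hx
  · simpa [abs_of_nonneg hx] using of_constant_sign 1 (by omega)
  · simpa [abs_of_nonpos hx] using of_constant_sign (-1) (by omega)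

theorem card_filter_neg_one_add_card_filter_one :
    #{i ∈ N | σ i = -1} + #{i ∈ N | σ i = 1} = #N := by
  simpa [Int.units_ne_iff_eq_neg, add_comm] using
    card_filter_add_card_filter_not (s := N) (fun i ↦ σ i = 1)

theorem exists_subset_sum_units_consecutiveModEq {k : ℕ} (hk : k ≠ 0) (hN : k ≤ #N + 2) (a : ℤ) :
    ∃ T ⊆ N, ConsecutiveModEq k a (∑ i ∈ T, (σ i : ℤ)) := by
  have hcard := card_filter_neg_one_add_card_filter_one σ N
  obtain ⟨x, ⟨hlo, hhi⟩, hx⟩ :=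
    ConsecutiveModEq.exists_mem_Icc hk hN a (-(#{i ∈ N | σ i = -1} : ℤ))
  obtain ⟨T, hT, rfl⟩ := exists_subset_sum_units_eq σ N hlo (by omega)
  exact ⟨T, hT, hx⟩

end SignedSubsetSums

section StarWeight

variable {V : Type*} [DecidableEq V]

/-- The edge weighting supported on the star at `v` that gives the pair `s(u, v)` weight `f u`. -/
def starWeight (v : V) (f : V → ℤ) (e : Sym2 V) : ℤ :=
  if h : v ∈ e then f (Sym2.Mem.other' h) else 0

theorem starWeight_mk (v : V) (f : V → ℤ) (u : V) : starWeight v f s(u, v) = f u := by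
  have hv : v ∈ s(u, v) := Sym2.mem_mk_right u v
  have hother : Sym2.Mem.other' hv = u :=
    Sym2.congr_right.mp ((Sym2.other_spec' hv).trans Sym2.eq_swap)
  rw [starWeight, dif_pos hv, hother]

theorem starWeight_of_notMem {v : V} (f : V → ℤ) {e : Sym2 V} (h : v ∉ e) :
    starWeight v f e = 0 :=
  dif_neg h

theorem abs_starWeight_le {v : V} {f : V → ℤ} {c : ℤ} (hf : ∀ u, |f u| ≤ c) (e : Sym2 V) :
    |starWeight v f e| ≤ if v ∈ e then c else 0 := by
  unfold starWeight
  split_ifs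
  · exact hf _
  · exact abs_zero.le

end StarWeight

section WeightedDegree

variable {V : Type*} (H : SimpleGraph V) [H.LocallyFinite]

/-- The weighted degree of `v` in `H`: the sum of the weights of the edges at `v`. Weightings are
functions on all unordered pairs, of which only the edges of `H` matter. -/
def weightedDegree (w : Sym2 V → ℤ) (v : V) : ℤ :=
  ∑ u ∈ H.neighborFinset v, w s(u, v)

theorem weightedDegree_add (w w' : Sym2 V → ℤ) (v : V) :
    weightedDegree H (w + w') v = weightedDegree H w v + weightedDegree H w' v :=
  sum_add_distrib

variable [DecidableEq V]

theorem weightedDegree_starWeight_self (v : V) (f : V → ℤ) :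
    weightedDegree H (starWeight v f) v = ∑ u ∈ H.neighborFinset v, f u :=
  sum_congr rfl fun u _ ↦ starWeight_mk v f u

theorem weightedDegree_starWeight_of_ne {v x : V} (hx : x ≠ v) (f : V → ℤ) :
    weightedDegree H (starWeight v f) x = if v ∈ H.neighborFinset x then f x else 0 := by
  have hterm (u : V) : starWeight v f s(u, x) = if v = u then f x else 0 := by
    split_ifs with hu
    · rw [← hu, Sym2.eq_swap, starWeight_mk]
    · exact starWeight_of_notMem f (by simp [hu, hx.symm])
  simp only [weightedDegree, hterm, sum_ite_eq]

theorem exists_adjust_weightedDegree_at {k : ℕ} (hk : k ≠ 0) (w : Sym2 V → ℤ) (a : V → ℤ) {v : V}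
    (hv : k ≤ H.degree v + 2) :
    ∃ w' : Sym2 V → ℤ,
      (∀ e, |w' e - w e| ≤ if v ∈ e then 1 else 0) ∧
      ConsecutiveModEq k (a v) (weightedDegree H w' v) ∧
      ∀ x ≠ v, ConsecutiveModEq k (a x) (weightedDegree H w x) →
        ConsecutiveModEq k (a x) (weightedDegree H w' x) := by
  let σ (u : V) : ℤˣ := toggleSign k (a u) (weightedDegree H w u)
  obtain ⟨T, hT, hsum⟩ := exists_subset_sum_units_consecutiveModEq σ (H.neighborFinset v) hk hv
    (a v - weightedDegree H w v)
  let f (u : V) : ℤ := if u ∈ T then σ u else 0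
  have hf (u : V) : |f u| ≤ 1 := by
    unfold f
    split_ifs
    · exact (Int.isUnit_iff_abs_eq.mp (σ u).isUnit).le
    · simp
  refine ⟨w + starWeight v f, fun e ↦ ?_, ?_, fun x hx hwx ↦ ?_⟩
  · simpa using abs_starWeight_le hf e
  · have hfsum : ∑ u ∈ H.neighborFinset v, f u = ∑ u ∈ T, (σ u : ℤ) := by
      rw [sum_ite_mem, inter_eq_right.mpr hT]
    rw [weightedDegree_add, weightedDegree_starWeight_self, hfsum]
    simpa using hsum.add_left (weightedDegree H w v)
  · rw [weightedDegree_add, weightedDegree_starWeight_of_ne H hx]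
    unfold f
    split_ifs
    · exact hwx.add_toggleSign
    all_goals simpa using hwx

theorem residue_adjustment_general {k : ℕ} (hk : k ≠ 0) (w₀ : Sym2 V → ℤ) (a : V → ℤ)
    (S : Finset V) (hdeg : ∀ v ∈ S, k ≤ H.degree v + 2) :
    ∃ w : Sym2 V → ℤ,
      (∀ e, |w e - w₀ e| ≤ #{v ∈ S | v ∈ e}) ∧
      ∀ v ∈ S, ConsecutiveModEq k (a v) (weightedDegree H w v) := by
  induction S using Finset.induction_on with
  | empty => exact ⟨w₀, by simp, by simp⟩
  | insert v S hvS ih =>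
    obtain ⟨w, hw, hwS⟩ := ih fun x hx ↦ hdeg x (mem_insert_of_mem hx)
    obtain ⟨w', hw', hw'v, hw'S⟩ :=
      exists_adjust_weightedDegree_at H hk w a (hdeg v (mem_insert_self v S))
    refine ⟨w', fun e ↦ ?_, ?_⟩
    · calc
        |w' e - w₀ e| ≤ |w' e - w e| + |w e - w₀ e| := abs_sub_le _ _ _
        _ ≤ (if v ∈ e then 1 else 0) + #{x ∈ S | x ∈ e} := add_le_add (hw' e) (hw e)
        _ = #{x ∈ insert v S | x ∈ e} := by
          rw [card_filter, card_filter, sum_insert hvS]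
          push_cast
          rfl
    · refine forall_mem_insert _ _ _ |>.mpr ⟨hw'v, fun x hx ↦ ?_⟩
      exact hw'S x (ne_of_mem_of_not_mem hx hvS) (hwS x hx)

end WeightedDegree

theorem card_filter_mem_sym2_le_two {V : Type*} [DecidableEq V] (S : Finset V) (e : Sym2 V) :
    #{v ∈ S | v ∈ e} ≤ 2 := by
  induction e with
  | h x y =>
    have hsub : {v ∈ S | v ∈ s(x, y)} ⊆ {x, y} := fun v hv ↦ by simpa using (mem_filter.mp hv).2
    exact (card_le_card hsub).trans card_le_two

/-- Residue-adjustment lemma (Step C-1): if every vertex of a finite simple graph `H`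
has degree at least `k + 6` (`k ≥ 2`), then any initial edge weighting `w₀ : E(H) → ℤ`
can be modified by at most `2` on every edge so that, for a prescribed `a : V(H) → ℤ`,
the weighted degree of every vertex `v` is congruent to `a v` or `a v + 1` modulo `k`. -/
theorem residue_adjustment {V : Type*} [Fintype V] (k : ℕ) (hk : 2 ≤ k)
    (H : SimpleGraph V) [DecidableRel H.Adj]
    (hdeg : ∀ v : V, k + 6 ≤ H.degree v)
    (w₀ : Sym2 V → ℤ) (a : V → ℤ) :
    ∃ w : Sym2 V → ℤ,
      (∀ e ∈ H.edgeSet, |w e - w₀ e| ≤ 2) ∧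
      (∀ v : V,
        (∑ u ∈ H.neighborFinset v, w s(u, v)) ≡ a v [ZMOD (k : ℤ)] ∨
        (∑ u ∈ H.neighborFinset v, w s(u, v)) ≡ a v + 1 [ZMOD (k : ℤ)]) := by
  classical
  obtain ⟨w, hw, hwdeg⟩ := residue_adjustment_general H (by omega) w₀ a univ
    fun v _ ↦ (by have := hdeg v; omega : k ≤ H.degree v + 2)
  exact ⟨w, fun e _ ↦ (hw e).trans (by exact_mod_cast card_filter_mem_sym2_le_two univ e),
    fun v ↦ hwdeg v (mem_univ v)⟩
end

section
/- There is a constant c depending only on ε such that the following holds whenever δ ≥ c and n ≥ c·δ: for every integer 1 ≤ q ≤ k' and all integers d_v, d_u ≥ δ, there is at most one integer p with 1 ≤ p ≤ k' for which both (⌈⌈n/δ⌉/(3k')⌉·(k'+q) + (13n/δ^(1+ε) + 4))·d_v > (⌈⌈n/δ⌉/(3k')⌉·(k'+p) − (13n/δ^(1+ε) + 4))·d_u and (⌈⌈n/δ⌉/(3k')⌉·(k'+q) − (13n/δ^(1+ε) + 4))·d_v < (⌈⌈n/δ⌉/(3k')⌉·(k'+p) + (13n/δ^(1+ε) + 4))·d_u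 hold. -/
open MeasureTheory ProbabilityTheory
open scoped ENNReal

noncomputable section

namespace FL

/-- Index of the bin containing a value `x ∈ [0,1]` among `δ` equal bins `B_1, …, B_δ`. -/
def binOf (δ : ℕ) (x : ℝ) : ℕ := min δ (⌊x * δ⌋₊ + 1)

variable {V : Type*} {Ω : Type*}

/-- The (random) small set `S`, consisting of the last `s*` bins. -/
def smallSet (δ sstar : ℕ) (X : V → Ω → ℝ) (ω : Ω) : Set V :=
  {v | δ - sstar < binOf δ (X v ω)}

/-- The (random) big set `B = V ∖ S`. -/
def bigSet (δ sstar : ℕ) (X : V → Ω → ℝ) (ω : Ω) : Set V :=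
  (smallSet δ sstar X ω)ᶜ

/-- The (random) group `S_q`, given a bin-to-group assignment `g`. -/
def groupSet (δ sstar : ℕ) (g : ℕ → ℕ) (X : V → Ω → ℝ) (q : ℕ) (ω : Ω) : Set V :=
  {v | δ - sstar < binOf δ (X v ω) ∧ g (binOf δ (X v ω)) = q}

/-- Number of neighbours of `v` inside a set `U`. -/
def degIn (G : SimpleGraph V) (v : V) (U : Set V) : ℕ :=
  {u | G.Adj v u ∧ u ∈ U}.ncard

/-- A valid assignment of the `s*` bins of `S` into `k'` groups of consecutive bins,
each of size `⌊s*/k'⌋` or `⌈s*/k'⌉`, the first group having size `⌊s*/k'⌋`. -/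
def GoodGrouping (δ sstar k' : ℕ) (g : ℕ → ℕ) : Prop :=
  (∀ i ∈ Finset.Ioc (δ - sstar) δ, g i ∈ Finset.Icc 1 k') ∧
  (∀ i ∈ Finset.Ioc (δ - sstar) δ, ∀ j ∈ Finset.Ioc (δ - sstar) δ, i ≤ j → g i ≤ g j) ∧
  (∀ q ∈ Finset.Icc 1 k',
    ((Finset.Ioc (δ - sstar) δ).filter (fun i => g i = q)).card = sstar / k' ∨
    ((Finset.Ioc (δ - sstar) δ).filter (fun i => g i = q)).card = ⌈(sstar : ℚ) / (k' : ℚ)⌉₊) ∧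
  ((Finset.Ioc (δ - sstar) δ).filter (fun i => g i = 1)).card = sstar / k'

/-- `⌈n/δ⌉` as an integer. -/
def ndCeil (n δ : ℕ) : ℤ := ⌈(n : ℚ) / (δ : ℚ)⌉

/-- `⌈⌈n/δ⌉/(3k')⌉ · (j + k')`, the weight used on edges joining `B` to `S_j`. -/
def edgeCross (n δ k' j : ℕ) : ℤ := ⌈(ndCeil n δ : ℚ) / (3 * (k' : ℚ))⌉ * ((j : ℤ) + (k' : ℤ))

/-- The Step-A edge weighting `f₁` (as a symmetric function of ordered pairs;
it takes the value `0` on non-adjacent pairs). -/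
def f1 (G : SimpleGraph V) [DecidableRel G.Adj] (n δ sstar k' a' : ℕ) (g : ℕ → ℕ)
    (X : V → Ω → ℝ) (ω : Ω) (u v : V) : ℤ :=
  if G.Adj u v then
    if binOf δ (X u ω) ≤ δ - sstar ∧ binOf δ (X v ω) ≤ δ - sstar then
      if δ - sstar + 1 < binOf δ (X u ω) + binOf δ (X v ω) then ndCeil n δ + (a' : ℤ) else 1
    else if binOf δ (X u ω) ≤ δ - sstar then edgeCross n δ k' (g (binOf δ (X v ω)))
    else if binOf δ (X v ω) ≤ δ - sstar then edgeCross n δ k' (g (binOf δ (X u ω)))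
    else 0
  else 0

/-- The weighted degree `f̃₁(v)` of a vertex under `f₁`. -/
def tf1 (G : SimpleGraph V) [Fintype V] [DecidableRel G.Adj] (n δ sstar k' a' : ℕ)
    (g : ℕ → ℕ) (X : V → Ω → ℝ) (ω : Ω) (v : V) : ℤ :=
  ∑ u ∈ G.neighborFinset v, f1 G n δ sstar k' a' g X ω u v

/-- `σ_μ(v,i) = E[f̃₁(v) | v ∈ B_i]` for `1 ≤ i ≤ δ - s*`, and `0` otherwise. -/
def sigmaMu (G : SimpleGraph V) [Fintype V] [DecidableRel G.Adj] [MeasureSpace Ω]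
    (n δ sstar k' a' : ℕ) (g : ℕ → ℕ) (X : V → Ω → ℝ) (v : V) (i : ℕ) : ℝ :=
  if 1 ≤ i ∧ i ≤ δ - sstar then
    ∫ ω, (tf1 G n δ sstar k' a' g X ω v : ℝ) ∂((ℙ : Measure Ω)[|{ω | binOf δ (X v ω) = i}])
  else 0

/-- The common length `⌈n/δ⌉ + a' - 1` of the intervals `I_h`. -/
def Ilen (n δ a' : ℕ) : ℝ := (ndCeil n δ : ℝ) + (a' : ℝ) - 1

/-- The interval `I_h`. -/
def IIv (n δ a' : ℕ) (h : ℕ) : Set ℝ :=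
  if h = 0 then Set.Ioo 0 (Ilen n δ a')
  else Set.Ico ((h : ℝ) * Ilen n δ a') (((h : ℝ) + 1) * Ilen n δ a')

/-- `μ_h`: the expected number of vertices `v` with `σ_μ(v, Z(v)) ∈ I_h`. -/
def muH (G : SimpleGraph V) [Fintype V] [DecidableRel G.Adj] [MeasureSpace Ω]
    (n δ sstar k' a' : ℕ) (g : ℕ → ℕ) (X : V → Ω → ℝ) (h : ℕ) : ℝ :=
  ∫ ω, (({v : V | sigmaMu G n δ sstar k' a' g X v (binOf δ (X v ω)) ∈ IIv n δ a' h}).ncard : ℝ)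

/-- `μ_{[h₁,h₂)}`. -/
def muBlock (G : SimpleGraph V) [Fintype V] [DecidableRel G.Adj] [MeasureSpace Ω]
    (n δ sstar k' a' : ℕ) (g : ℕ → ℕ) (X : V → Ω → ℝ) (h₁ h₂ : ℕ) : ℝ :=
  ∑ h ∈ Finset.Ico h₁ h₂, muH G n δ sstar k' a' g X h

/-- The (random) set `V_h`. -/
def Vh (G : SimpleGraph V) [Fintype V] [DecidableRel G.Adj] [MeasureSpace Ω]
    (n δ sstar k' a' : ℕ) (α : ℝ) (g : ℕ → ℕ) (X : V → Ω → ℝ) (ω : Ω) (h : ℕ) : Set V :=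
  {v | sigmaMu G n δ sstar k' a' g X v (binOf δ (X v ω)) ∈ IIv n δ a' h ∧
    |(tf1 G n δ sstar k' a' g X ω v : ℝ) - sigmaMu G n δ sstar k' a' g X v (binOf δ (X v ω))| ≤
      (G.degree v : ℝ) ^ ((1 : ℝ) / 2 + α) * Ilen n δ a'}

/-- The (random) set `Y_h` of bad vertices of the first kind. -/
def Yh (G : SimpleGraph V) [Fintype V] [DecidableRel G.Adj] [MeasureSpace Ω]
    (n δ sstar k' a' : ℕ) (α : ℝ) (g : ℕ → ℕ) (X : V → Ω → ℝ) (ω : Ω) (h : ℕ) : Set V :=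
  {v | sigmaMu G n δ sstar k' a' g X v (binOf δ (X v ω)) ∈ IIv n δ a' h ∧
    |(tf1 G n δ sstar k' a' g X ω v : ℝ) - sigmaMu G n δ sstar k' a' g X v (binOf δ (X v ω))| >
      (G.degree v : ℝ) ^ ((1 : ℝ) / 2 + α) * Ilen n δ a'}

/-- `V_{[h₁,h₂)}`. -/
def Vblock (G : SimpleGraph V) [Fintype V] [DecidableRel G.Adj] [MeasureSpace Ω]
    (n δ sstar k' a' : ℕ) (α : ℝ) (g : ℕ → ℕ) (X : V → Ω → ℝ) (ω : Ω) (h₁ h₂ : ℕ) : Set V :=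
  ⋃ h ∈ Finset.Ico h₁ h₂, Vh G n δ sstar k' a' α g X ω h

/-- `Y_{[h₁,h₂)}`. -/
def Yblock (G : SimpleGraph V) [Fintype V] [DecidableRel G.Adj] [MeasureSpace Ω]
    (n δ sstar k' a' : ℕ) (α : ℝ) (g : ℕ → ℕ) (X : V → Ω → ℝ) (ω : Ω) (h₁ h₂ : ℕ) : Set V :=
  ⋃ h ∈ Finset.Ico h₁ h₂, Yh G n δ sstar k' a' α g X ω h

/-- The (random) set `Z_S` of vertices with few neighbours in `S`. -/
def ZS (G : SimpleGraph V) [Fintype V] [DecidableRel G.Adj] (δ sstar : ℕ)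
    (X : V → Ω → ℝ) (ω : Ω) : Set V :=
  {v | (degIn G v (smallSet δ sstar X ω) : ℝ) < (sstar : ℝ) * (G.degree v : ℝ) / (2 * (δ : ℝ))}

/-- The (random) set `Z_{S_q}` of vertices of `S_q` whose degree to `B` is far from expected. -/
def ZSq (G : SimpleGraph V) [Fintype V] [DecidableRel G.Adj] (δ sstar : ℕ) (ε : ℝ)
    (g : ℕ → ℕ) (X : V → Ω → ℝ) (q : ℕ) (ω : Ω) : Set V :=
  {v | v ∈ groupSet δ sstar g X q ω ∧
    |(degIn G v (bigSet δ sstar X ω) : ℝ) - (G.degree v : ℝ) * ((δ : ℝ) - (sstar : ℝ)) / (δ : ℝ)| >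
      (G.degree v : ℝ) ^ ((1 : ℝ) / 2 + ε)}

/-- The set `U_b` of bad vertices (given a choice `ZS'` of the set `Z'_S`). -/
def Ub (G : SimpleGraph V) [Fintype V] [DecidableRel G.Adj] [MeasureSpace Ω]
    (n δ sstar k' a' : ℕ) (ε α : ℝ) (g : ℕ → ℕ) (X : V → Ω → ℝ) (ZS' : Ω → Set V)
    (ω : Ω) : Set V :=
  Yblock G n δ sstar k' a' α g X ω 0 (2 * n) ∪ ZS G δ sstar X ω ∪ ZS' ω ∪
    ⋃ q ∈ Finset.Icc 1 k', ZSq G δ sstar ε g X q ω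

/-- `⌈⌈n/δ⌉/(3k')⌉ · (k' + q)` as a real number. -/
def crossMid (n δ k' q : ℕ) : ℝ := ((⌈(ndCeil n δ : ℚ) / (3 * (k' : ℚ))⌉ : ℤ) : ℝ) * ((k' : ℝ) + (q : ℝ))

/-- The error term `13n/δ^(1+ε) + 4`. -/
def errTerm (n δ : ℕ) (ε : ℝ) : ℝ := 13 * (n : ℝ) / (δ : ℝ) ^ (1 + ε) + 4

/-- The (random) set `L(v)` of vertices "close" to `v`. -/
def Lset (G : SimpleGraph V) [Fintype V] [DecidableRel G.Adj] (n δ sstar k' : ℕ) (ε : ℝ)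
    (g : ℕ → ℕ) (X : V → Ω → ℝ) (ω : Ω) (v : V) : Set V :=
  {u | ∃ p q : ℕ, 1 ≤ p ∧ p ≤ k' ∧ 1 ≤ q ∧ q ≤ k' ∧
    v ∈ groupSet δ sstar g X q ω ∧ u ∈ groupSet δ sstar g X p ω ∧
    (crossMid n δ k' q + errTerm n δ ε) * (G.degree v : ℝ) >
      (crossMid n δ k' p - errTerm n δ ε) * (G.degree u : ℝ) ∧
    (crossMid n δ k' q - errTerm n δ ε) * (G.degree v : ℝ) <
      (crossMid n δ k' p + errTerm n δ ε) * (G.degree u : ℝ)}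

/-!
For positive degrees, a pair of closeness inequalities says that the intervals `(m ± E) d_v` and
`(m' ± E) d_u` around multiples of the weights `m = A (k' + q)` and `m' = A (k' + p)` meet, where
`A = ⌈⌈n/δ⌉/(3k')⌉`. If `p₁ < p₂` were both close to `q`, with weights `m₁` and `m₂`, then
`(m₂ - E) / (m + E) < d_v / d_u < (m₁ + E) / (m - E)`. All weights are within a factor `2` of each
other, so clearing denominators gives `m₂ - m₁ < 6 E`. But distinct weights differ by at least `A`,
and `6 E < A`: since `k' ≥ 2`, rounding up at most doubles the two terms of the minimum defining
`k'`, so `n/δ > 200 k'` and `δ^ε > 1000 k'`, while `n/δ ≤ 3 k' A`.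
-/

section OrderedRing

variable {R : Type*} [CommRing R] [LinearOrder R] [IsStrictOrderedRing R]

lemma mul_lt_mul_of_ratio_between {a b x y s t : R} (ha : 0 < a) (hb : 0 < b) (ht : 0 ≤ t)
    (hlower : x * t < b * s) (hupper : a * s < y * t) : a * x < b * y := by
  refine lt_of_mul_lt_mul_right ?_ ht
  calc a * x * t = a * (x * t) := mul_assoc ..
    _ < a * (b * s) := by gcongr
    _ = b * (a * s) := mul_left_comm ..
    _ < b * (y * t) := by gcongr
    _ = b * y * t := (mul_assoc ..).symm

lemma sub_lt_six_mul_of_ratio_between {m m₁ m₂ E s t : R} (hE : 0 ≤ E) (hEm : E < m)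
    (hm₁ : m₁ ≤ 2 * m) (hm₂ : m₂ ≤ 2 * m) (ht : 0 ≤ t)
    (hlower : (m₂ - E) * t < (m + E) * s) (hupper : (m - E) * s < (m₁ + E) * t) :
    m₂ - m₁ < 6 * E := by
  have hm : 0 < m := hE.trans_lt hEm
  have hcross : (m - E) * (m₂ - E) < (m + E) * (m₁ + E) :=
    mul_lt_mul_of_ratio_between (sub_pos.2 hEm) (by positivity) ht hlower hupper
  refine lt_of_mul_lt_mul_left ?_ hm.le
  calc m * (m₂ - m₁) < E * (2 * m + m₁ + m₂) := by linear_combination hcross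
    _ ≤ E * (6 * m) := by gcongr; linarith
    _ = m * (6 * E) := by ring

end OrderedRing

lemma natCast_lt_two_mul_of_le_ceil {K : Type*} [Field K] [LinearOrder K] [IsStrictOrderedRing K]
    [FloorSemiring K] {k : ℕ} {x : K} (hk : 2 ≤ k) (hkx : k ≤ ⌈x⌉₊) : (k : K) < 2 * x := by
  have hx : 1 < x := by exact_mod_cast Nat.lt_ceil.1 (hk.trans hkx)
  calc (k : K) ≤ ⌈x⌉₊ := by exact_mod_cast hkx
    _ < 2 * x := Nat.ceil_lt_two_mul (by linarith)

/-- The step `⌈⌈n/δ⌉/(3k')⌉` between the weights `crossMid` of consecutive groups. -/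
def crossStep (n δ k' : ℕ) : ℤ := ⌈(ndCeil n δ : ℚ) / (3 * (k' : ℚ))⌉

/-- Closeness of the group `p` (with degree `du`) to the group `q` (with degree `dv`), the relation
defining `L(v)`. Degrees are arbitrary reals. -/
def IsCloseGroup (n δ k' : ℕ) (ε dv du : ℝ) (q p : ℕ) : Prop :=
  (crossMid n δ k' q + errTerm n δ ε) * dv > (crossMid n δ k' p - errTerm n δ ε) * du ∧
    (crossMid n δ k' q - errTerm n δ ε) * dv < (crossMid n δ k' p + errTerm n δ ε) * du

section Weights

variable {n δ k' : ℕ}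

lemma crossStep_nonneg : 0 ≤ crossStep n δ k' := by
  unfold crossStep ndCeil
  positivity

lemma div_le_three_mul_crossStep (hk : 0 < k') :
    (n : ℝ) / δ ≤ 3 * k' * crossStep n δ k' := by
  have hstep : (ndCeil n δ : ℚ) ≤ crossStep n δ k' * (3 * k') :=
    (div_le_iff₀ (by positivity)).1 (Int.le_ceil _)
  have hrat : (n : ℚ) / δ ≤ 3 * k' * crossStep n δ k' := by
    linarith [show (n : ℚ) / δ ≤ ndCeil n δ from Int.le_ceil _]
  have hreal : (((n : ℚ) / δ : ℚ) : ℝ) ≤ ((3 * k' * crossStep n δ k' : ℚ) : ℝ) :=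
    Rat.cast_le.2 hrat
  simpa using hreal

lemma crossMid_eq_crossStep_mul (q : ℕ) :
    crossMid n δ k' q = crossStep n δ k' * ((k' : ℝ) + q) := rfl

lemma crossStep_le_crossMid (hk : 0 < k') (q : ℕ) :
    (crossStep n δ k' : ℝ) ≤ crossMid n δ k' q := by
  have hone : (1 : ℝ) ≤ k' + q := by exact_mod_cast (by omega : 1 ≤ k' + q)
  rw [crossMid_eq_crossStep_mul]
  exact le_mul_of_one_le_right (by exact_mod_cast crossStep_nonneg) hone

lemma crossMid_le_two_mul_crossMid {p : ℕ} (hp : p ≤ k') (q : ℕ) :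
    crossMid n δ k' p ≤ 2 * crossMid n δ k' q := by
  have hstep : (0 : ℝ) ≤ crossStep n δ k' := by exact_mod_cast crossStep_nonneg
  have hsum : (k' : ℝ) + p ≤ 2 * (k' + q) := by exact_mod_cast (by omega : k' + p ≤ 2 * (k' + q))
  rw [crossMid_eq_crossStep_mul, crossMid_eq_crossStep_mul, mul_left_comm]
  gcongr

lemma crossStep_le_crossMid_sub_crossMid {p₁ p₂ : ℕ} (hp : p₁ < p₂) :
    (crossStep n δ k' : ℝ) ≤ crossMid n δ k' p₂ - crossMid n δ k' p₁ := by
  have hgap : (1 : ℝ) ≤ (k' + p₂) - (k' + p₁) := by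
    have : (p₁ : ℝ) + 1 ≤ p₂ := by exact_mod_cast hp
    linarith
  rw [crossMid_eq_crossStep_mul, crossMid_eq_crossStep_mul, ← mul_sub]
  exact le_mul_of_one_le_right (by exact_mod_cast crossStep_nonneg) hgap

lemma errTerm_pos (ε : ℝ) : 0 < errTerm n δ ε := by
  unfold errTerm
  positivity

lemma errTerm_eq (hδ : 0 < δ) (ε : ℝ) :
    errTerm n δ ε = 13 * ((n : ℝ) / δ / (δ : ℝ) ^ ε) + 4 := by
  rw [errTerm, Real.rpow_add (by positivity), Real.rpow_one, mul_div_assoc, div_div]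

lemma six_mul_errTerm_lt_crossStep {ε : ℝ} (hδ : 0 < δ) (hk : 2 ≤ k')
    (hkn : k' ≤ ⌈(n : ℝ) / (400 * (δ : ℝ))⌉₊) (hkδ : k' ≤ ⌈(δ : ℝ) ^ ε / 2000⌉₊) :
    6 * errTerm n δ ε < crossStep n δ k' := by
  have hkpos : (0 : ℝ) < k' := by positivity
  have hstep : (0 : ℝ) ≤ crossStep n δ k' := by exact_mod_cast crossStep_nonneg
  have hratio : (n : ℝ) / δ ≤ 3 * k' * crossStep n δ k' := div_le_three_mul_crossStep (by omega)
  have hratio_large : 200 * (k' : ℝ) < n / δ := by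
    have hlt := natCast_lt_two_mul_of_le_ceil hk hkn
    rw [mul_comm (400 : ℝ), ← div_div] at hlt
    linarith
  have hpow_large : 1000 * (k' : ℝ) < (δ : ℝ) ^ ε := by
    linarith [natCast_lt_two_mul_of_le_ceil hk hkδ]
  have hstep_large : 200 < 3 * (crossStep n δ k' : ℝ) :=
    lt_of_mul_lt_mul_right (by linarith) hkpos.le
  have hquot : (n : ℝ) / δ / (δ : ℝ) ^ ε ≤ 3 * crossStep n δ k' / 1000 :=
    calc (n : ℝ) / δ / (δ : ℝ) ^ ε ≤ 3 * k' * crossStep n δ k' / (1000 * k') := by gcongr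
      _ = 3 * crossStep n δ k' / 1000 := by field_simp
  rw [errTerm_eq hδ]
  linarith

lemma le_of_crossMid_ratio_between {ε dv du : ℝ} {q p₁ p₂ : ℕ} (hδ : 0 < δ)
    (hkn : k' ≤ ⌈(n : ℝ) / (400 * (δ : ℝ))⌉₊) (hkδ : k' ≤ ⌈(δ : ℝ) ^ ε / 2000⌉₊)
    (hdu : 0 ≤ du) (hp₁ : 1 ≤ p₁) (hp₂ : p₂ ≤ k')
    (hlower : (crossMid n δ k' p₂ - errTerm n δ ε) * du <
      (crossMid n δ k' q + errTerm n δ ε) * dv)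
    (hupper : (crossMid n δ k' q - errTerm n δ ε) * dv <
      (crossMid n δ k' p₁ + errTerm n δ ε) * du) :
    p₂ ≤ p₁ := by
  by_contra! hlt
  have hE : 0 < errTerm n δ ε := errTerm_pos ε
  have hstep : 6 * errTerm n δ ε < crossStep n δ k' :=
    six_mul_errTerm_lt_crossStep hδ (by omega) hkn hkδ
  have hEmid : errTerm n δ ε < crossMid n δ k' q := by
    linarith [crossStep_le_crossMid (n := n) (δ := δ) (by omega : 0 < k') q]
  have hgap : crossMid n δ k' p₂ - crossMid n δ k' p₁ < 6 * errTerm n δ ε :=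
    sub_lt_six_mul_of_ratio_between hE.le hEmid (crossMid_le_two_mul_crossMid (by omega) q)
      (crossMid_le_two_mul_crossMid hp₂ q) hdu hlower hupper
  linarith [crossStep_le_crossMid_sub_crossMid (n := n) (δ := δ) (k' := k') hlt]

theorem at_most_one_close_group_general {ε dv du : ℝ} {q p₁ p₂ : ℕ} (hδ : 0 < δ)
    (hkn : k' ≤ ⌈(n : ℝ) / (400 * (δ : ℝ))⌉₊) (hkδ : k' ≤ ⌈(δ : ℝ) ^ ε / 2000⌉₊)
    (hdu : 0 ≤ du) (hp₁ : p₁ ∈ Set.Icc 1 k') (hp₂ : p₂ ∈ Set.Icc 1 k')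
    (hclose₁ : IsCloseGroup n δ k' ε dv du q p₁) (hclose₂ : IsCloseGroup n δ k' ε dv du q p₂) :
    p₁ = p₂ :=
  le_antisymm
    (le_of_crossMid_ratio_between hδ hkn hkδ hdu hp₂.1 hp₁.2 hclose₁.1 hclose₂.2)
    (le_of_crossMid_ratio_between hδ hkn hkδ hdu hp₁.1 hp₂.2 hclose₂.1 hclose₁.2)

end Weights

/-- For `δ ≥ c` and `n ≥ c·δ` (with `c = c(ε)`), given `1 ≤ q ≤ k'` and degree values
`d_v, d_u ≥ δ`, there is at most one `1 ≤ p ≤ k'` for which the pair of "closeness"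
inequalities holds. -/
theorem at_most_one_close_group
    (ε : ℝ) (hε : ε ∈ Set.Ioo (0 : ℝ) 0.25) :
    ∃ c : ℝ, ∀ n δ : ℕ, 0 < n → 0 < δ → c ≤ (δ : ℝ) → c * (δ : ℝ) ≤ (n : ℝ) →
      ∀ k' : ℕ, k' = min ⌈(n : ℝ) / (400 * (δ : ℝ))⌉₊ ⌈(δ : ℝ) ^ ε / 2000⌉₊ →
      ∀ q : ℕ, 1 ≤ q → q ≤ k' →
      ∀ dv du : ℤ, (δ : ℤ) ≤ dv → (δ : ℤ) ≤ du →
      ∀ p₁ p₂ : ℕ, 1 ≤ p₁ → p₁ ≤ k' → 1 ≤ p₂ → p₂ ≤ k' →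
      ((crossMid n δ k' q + errTerm n δ ε) * (dv : ℝ) >
          (crossMid n δ k' p₁ - errTerm n δ ε) * (du : ℝ) ∧
        (crossMid n δ k' q - errTerm n δ ε) * (dv : ℝ) <
          (crossMid n δ k' p₁ + errTerm n δ ε) * (du : ℝ)) →
      ((crossMid n δ k' q + errTerm n δ ε) * (dv : ℝ) >
          (crossMid n δ k' p₂ - errTerm n δ ε) * (du : ℝ) ∧
        (crossMid n δ k' q - errTerm n δ ε) * (dv : ℝ) <
          (crossMid n δ k' p₂ + errTerm n δ ε) * (du : ℝ)) →
      p₁ = p₂ := by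
  refine ⟨0, fun n δ _ hδ _ _ k' hk q _ _ dv du _ hdu p₁ p₂ hp₁ hp₁k hp₂ hp₂k => ?_⟩
  have hdu_nonneg : (0 : ℝ) ≤ du := by exact_mod_cast (Int.natCast_nonneg δ).trans hdu
  exact at_most_one_close_group_general hδ (hk.trans_le (min_le_left _ _))
    (hk.trans_le (min_le_right _ _)) hdu_nonneg ⟨hp₁, hp₁k⟩ ⟨hp₂, hp₂k⟩

end FL
end
end
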